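/- arXiv:1012.2401 — 2 statements merged into one kernel-verified Lean document; each statement's English description precedes it below -/
import Mathlib

section
/- Let u be a bounded classical solution of the localized fractional heat equation. Then for every integer k ≥ 1 there is a constant C_k, depending only on k, s and n, such that: for every (t,x,y) ∈ [−1/2,0] × (B_{1/2}^+ ∪ B_{1/2}^0) the map x' ↦ u(t,x',y) is k times continuously differentiable in a neighborhood of x with ‖D_x^k u(t,x,y)‖ ≤ C_k · sup_{[−1,0]×B_1^+} |u|; moreover, for every x ∈ B_{1/2}^0 the map t ↦ D_x^k u(t,x,0) is differentiable on [−1/2,0] with ‖∂_t D_x^k u(t,x,0)‖ ≤ C_k · sup_{[−1,0]×B_1^+} |u|. -/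
open Set Filter Topology MeasureTheory
open scoped RealInnerProductSpace

noncomputable section

abbrev En (n : ℕ) := EuclideanSpace ℝ (Fin n)

/-- The open upper half ball `B_r^+`. -/
def halfBall (n : ℕ) (r : ℝ) : Set (En n × ℝ) :=
  {p | ‖p.1‖ ^ 2 + p.2 ^ 2 < r ^ 2 ∧ 0 < p.2}

/-- The closure of the upper half ball. -/
def closedHalfBall (n : ℕ) (r : ℝ) : Set (En n × ℝ) :=
  {p | ‖p.1‖ ^ 2 + p.2 ^ 2 ≤ r ^ 2 ∧ 0 ≤ p.2}

/-- `B_r^+ ∪ B_r^0`. -/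
def halfBallWithBase (n : ℕ) (r : ℝ) : Set (En n × ℝ) :=
  {p | ‖p.1‖ ^ 2 + p.2 ^ 2 < r ^ 2 ∧ 0 ≤ p.2}

/-- The flat ball `B_r^0` in `ℝⁿ`. -/
def flatBall (n : ℕ) (r : ℝ) : Set (En n) := {x | ‖x‖ < r}

/-- `(∂B_1)^+`. -/
def spherePlus (n : ℕ) : Set (En n × ℝ) := {p | ‖p.1‖ ^ 2 + p.2 ^ 2 = 1 ∧ 0 < p.2}

/-- closure of `(∂B_1)^+`. -/
def closedSpherePlus (n : ℕ) : Set (En n × ℝ) := {p | ‖p.1‖ ^ 2 + p.2 ^ 2 = 1 ∧ 0 ≤ p.2}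

/-- Second directional derivative of `u` at `p` in direction `v`. -/
def D2 {n : ℕ} (u : En n × ℝ → ℝ) (p v : En n × ℝ) : ℝ :=
  fderiv ℝ (fun q => fderiv ℝ u q v) p v

/-- The Laplacian in the `n+1` variables `(x, y)`. -/
def lap {n : ℕ} (u : En n × ℝ → ℝ) (p : En n × ℝ) : ℝ :=
  (∑ i : Fin n, D2 u p (EuclideanSpace.single i 1, 0)) + D2 u p (0, 1)

/-- `u` is `a`-harmonic on `Ω`: it is `C²` there and `Δu + (a/y) ∂_y u = 0`. -/
def IsAHarmonicOn {n : ℕ} (a : ℝ) (u : En n × ℝ → ℝ) (Ω : Set (En n × ℝ)) : Prop :=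
  ContDiffOn ℝ 2 u Ω ∧ ∀ p ∈ Ω, lap u p + (a / p.2) * fderiv ℝ u p (0, 1) = 0

/-- `lim_{y → 0⁺} y^a ∂_y w(x, y) = L`. -/
def NormalDerivLimit {n : ℕ} (a : ℝ) (w : En n × ℝ → ℝ) (x : En n) (L : ℝ) : Prop :=
  Tendsto (fun y : ℝ => y ^ a * fderiv ℝ w (x, y) (0, 1)) (𝓝[>] (0 : ℝ)) (𝓝 L)

/-- The boundary-restriction `(t, x) ↦ u(t, x, 0)`. -/
def bdryFun {n : ℕ} (u : ℝ → En n × ℝ → ℝ) : ℝ × En n → ℝ := fun q => u q.1 (q.2, 0)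

/-- A classical solution of the extended drift–diffusion equation on
`[-1,0] × closure (B_1^+)` with drift `b` and right-hand side `f`. -/
def IsExtDDSolution {n : ℕ} (a : ℝ) (b : ℝ → En n → En n) (f : ℝ → En n → ℝ)
    (u : ℝ → En n × ℝ → ℝ) : Prop :=
  ContinuousOn (fun q : ℝ × (En n × ℝ) => u q.1 q.2) (Icc (-1 : ℝ) 0 ×ˢ closedHalfBall n 1) ∧
  (∀ t ∈ Icc (-1 : ℝ) 0, IsAHarmonicOn a (u t) (halfBall n 1)) ∧
  (∀ q ∈ Ioc (-1 : ℝ) 0 ×ˢ flatBall n 1,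
      DifferentiableWithinAt ℝ (bdryFun u) (Ioc (-1 : ℝ) 0 ×ˢ flatBall n 1) q) ∧
  (∀ t x, (t, x) ∈ Ioc (-1 : ℝ) 0 ×ˢ flatBall n 1 →
      ∃ L : ℝ, NormalDerivLimit a (u t) x L ∧
        fderivWithin ℝ (bdryFun u) (Ioc (-1 : ℝ) 0 ×ˢ flatBall n 1) (t, x) (1, 0) +
          fderivWithin ℝ (bdryFun u) (Ioc (-1 : ℝ) 0 ×ˢ flatBall n 1) (t, x) (0, b t x) -
          L = f t x)

/-- A classical solution of the localized fractional heat equation on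
`[-1,0] × closure (B_1^+)`. -/
def IsFracHeatSolution {n : ℕ} (a : ℝ) (u : ℝ → En n × ℝ → ℝ) : Prop :=
  ContinuousOn (fun q : ℝ × (En n × ℝ) => u q.1 q.2) (Icc (-1 : ℝ) 0 ×ˢ closedHalfBall n 1) ∧
  (∀ t ∈ Icc (-1 : ℝ) 0, IsAHarmonicOn a (u t) (halfBall n 1)) ∧
  (∀ t ∈ Ioc (-1 : ℝ) 0, ∀ x ∈ flatBall n 1,
      DifferentiableWithinAt ℝ (fun τ => u τ (x, 0)) (Ioc (-1 : ℝ) 0) t ∧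
      NormalDerivLimit a (u t) x (derivWithin (fun τ => u τ (x, 0)) (Ioc (-1 : ℝ) 0) t))


section
/-- Coordinate vector. -/
def ee {n : ℕ} (i : Fin n) : En n := EuclideanSpace.single i 1

lemma norm_ee {n : ℕ} (i : Fin n) : ‖ee i‖ = 1 := by simp [ee]

lemma norm_smul_ee {n : ℕ} (i : Fin n) (h : ℝ) : ‖h • ee i‖ = |h| := by
  rw [norm_smul, norm_ee, mul_one, Real.norm_eq_abs]

/-- Difference quotient. -/
def dq {n : ℕ} (i : Fin n) (h : ℝ) (f : En n → ℝ) : En n → ℝ :=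
  fun z => (f (z + h • ee i) - f z) / h

/-- All mixed difference quotients of order `m` are bounded by `K` in the ball of radius `r`. -/
def DB {n : ℕ} : ℕ → ℝ → ℝ → (En n → ℝ) → Prop
  | 0, K, r, f => ∀ z, ‖z‖ < r → |f z| ≤ K
  | m + 1, K, r, f => ∀ (i : Fin n) (h : ℝ), h ≠ 0 → DB m K (r - |h|) (dq i h f)

lemma norm_add_smul_ee {n : ℕ} (z : En n) (i : Fin n) (h r : ℝ) (hz : ‖z‖ < r - |h|) :
    ‖z + h • ee i‖ < r := by
  have := norm_add_le z (h • ee i)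
  rw [norm_smul_ee] at this
  linarith

lemma DB.lim {n : ℕ} {ι : Type*} {l : Filter ι} [l.NeBot] {m : ℕ} {K r : ℝ}
    {F : ι → En n → ℝ} {f : En n → ℝ} (hF : ∀ᶠ j in l, DB m K r (F j))
    (hl : ∀ z, ‖z‖ < r → Tendsto (fun j => F j z) l (𝓝 (f z))) : DB m K r f := by
  induction m generalizing r F f with
  | zero =>
    intro z hz
    refine le_of_tendsto (hl z hz).abs ?_
    filter_upwards [hF] with j hj using hj z hz
  | succ m ih =>
    intro i h hh
    refine ih (F := fun j => dq i h (F j)) ?_ ?_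
    · filter_upwards [hF] with j hj using hj i h hh
    · intro z hz
      have h1 := hl _ (norm_add_smul_ee z i h r hz)
      have h2 := hl z (by have := abs_nonneg h; linarith)
      exact (h1.sub h2).div_const h

lemma DB.mono {n : ℕ} {m : ℕ} {K r K' r' : ℝ} {f : En n → ℝ} (hf : DB m K r f) (hK : K ≤ K')
    (hr : r' ≤ r) : DB m K' r' f := by
  induction m generalizing r r' f with
  | zero => intro z hz; exact (hf z (hz.trans_le hr)).trans hK
  | succ m ih => intro i h hh; exact ih (hf i h hh) (by linarith)

lemma DB.of_lt {n : ℕ} {m : ℕ} {K r : ℝ} {f : En n → ℝ} (hf : ∀ r' < r, DB m K r' f) :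
    DB m K r f := by
  induction m generalizing r f with
  | zero =>
    intro z hz
    obtain ⟨r', h1, h2⟩ := exists_between hz
    exact hf r' h2 z h1
  | succ m ih =>
    intro i h hh
    refine ih fun r' hr' => ?_
    have := hf (r' + |h|) (by linarith) i h hh
    simpa using this

lemma DB.congr {n : ℕ} {m : ℕ} {K r : ℝ} {f g : En n → ℝ} (hf : DB m K r f)
    (hfg : ∀ z, ‖z‖ < r → f z = g z) : DB m K r g := by
  induction m generalizing r f g with
  | zero => intro z hz; rw [← hfg z hz]; exact hf z hz
  | succ m ih =>
    intro i h hh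
    refine ih (hf i h hh) fun z hz => ?_
    simp only [dq]
    rw [hfg _ (norm_add_smul_ee z i h r hz), hfg z (by have := abs_nonneg h; linarith)]

lemma DB.sub {n : ℕ} {m : ℕ} {K r K' : ℝ} {f g : En n → ℝ} (hf : DB m K r f)
    (hg : DB m K' r g) : DB m (K + K') r (fun z => f z - g z) := by
  induction m generalizing r f g with
  | zero => intro z hz; exact (abs_sub _ _).trans (add_le_add (hf z hz) (hg z hz))
  | succ m ih =>
    intro i h hh
    refine (ih (hf i h hh) (hg i h hh)).congr fun z hz => ?_
    simp only [dq]; ring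

lemma DB.bound1 {n : ℕ} {K r : ℝ} {f : En n → ℝ} (hf : DB 1 K r f) (z : En n) (i : Fin n)
    (h : ℝ) (hz : ‖z‖ + |h| < r) : |f (z + h • ee i) - f z| ≤ K * |h| := by
  rcases eq_or_ne h 0 with rfl | hh
  · simp
  have := hf i h hh z (by linarith)
  simp only [dq, abs_div] at this
  rwa [div_le_iff₀ (abs_pos.2 hh)] at this

lemma DB.bound2 {n : ℕ} {K r : ℝ} {f : En n → ℝ} (hf : DB 2 K r f) (z : En n) (i j : Fin n)
    (a b : ℝ) (hz : ‖z‖ + |a| + |b| < r) :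
    |f (z + a • ee i + b • ee j) - f (z + a • ee i) - f (z + b • ee j) + f z| ≤ K * |a| * |b| := by
  rcases eq_or_ne b 0 with rfl | hb
  · simp
  have h1 : DB 1 K (r - |b|) (dq j b f) := hf j b hb
  have := h1.bound1 z i a (by linarith)
  simp only [dq, div_sub_div_same, abs_div] at this
  rw [div_le_iff₀ (abs_pos.2 hb)] at this
  have e : f (z + a • ee i + b • ee j) - f (z + a • ee i) - f (z + b • ee j) + f z =
    f (z + a • ee i + b • ee j) - f (z + a • ee i) - (f (z + b • ee j) - f z) := by ring
  rw [e]
  exact this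

lemma exists_deriv_line (φ : ℝ → ℝ) (ρ K1 K2 : ℝ) (hρ : 0 < ρ)
    (h1 : ∀ s h, |s| + |h| < ρ → |φ (s + h) - φ s| ≤ K1 * |h|)
    (h2 : ∀ a b, |a| + |b| < ρ → |φ (a + b) - φ a - φ b + φ 0| ≤ K2 * |a| * |b|) :
    ∃ g, HasDerivAt φ g 0 := by
  have hlip : LipschitzOnWith (Real.toNNReal K1) φ (Ioo (-ρ/3) (ρ/3)) := by
    refine LipschitzOnWith.of_dist_le_mul fun x hx y hy => ?_
    rw [Real.dist_eq, Real.dist_eq]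
    have hx' : |x| < ρ/3 := abs_lt.2 ⟨by linarith [hx.1], hx.2⟩
    have hy' : |y| < ρ/3 := abs_lt.2 ⟨by linarith [hy.1], hy.2⟩
    have := h1 y (x - y) (by have := abs_sub x y; linarith)
    rw [add_sub_cancel] at this
    refine this.trans ?_
    gcongr
    exact Real.le_coe_toNNReal K1
  have hae := hlip.ae_differentiableWithinAt_of_mem_real
  have hd := MeasureTheory.Measure.dense_of_ae hae
  have key : Cauchy (map (fun t => t⁻¹ • (φ (0 + t) - φ 0)) (𝓝[≠] (0:ℝ))) := by
    rw [Metric.cauchy_iff]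
    refine ⟨inferInstance, fun ε hε => ?_⟩
    set η := min (ρ/3) (ε / (4 * (|K2| + 1))) with hη
    have hηp : 0 < η := lt_min (by positivity) (by positivity)
    obtain ⟨s, hs, hs'⟩ := hd.exists_mem_open (isOpen_Ioo (a := 0) (b := η))
      ⟨η/2, by constructor <;> linarith⟩
    have hsρ : s < ρ/3 := hs'.2.trans_le (min_le_left _ _)
    have hsε : s < ε / (4 * (|K2| + 1)) := hs'.2.trans_le (min_le_right _ _)
    have hsm : s ∈ Ioo (-ρ/3) (ρ/3) := ⟨by linarith [hs'.1], hsρ⟩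
    have hds : DifferentiableAt ℝ φ s := (hs hsm).differentiableAt (Ioo_mem_nhds hsm.1 hsm.2)
    have ht := (hasDerivAt_iff_tendsto_slope_zero.1 hds.hasDerivAt)
    have hev : ∀ᶠ t in 𝓝[≠] (0:ℝ), dist (t⁻¹ • (φ (s + t) - φ s)) (deriv φ s) < ε/4 :=
      ht (Metric.ball_mem_nhds _ (by positivity))
    have hev2 : ∀ᶠ t in 𝓝[≠] (0:ℝ), |t| < ρ/3 := by
      refine nhdsWithin_le_nhds ?_
      have : ∀ᶠ t in 𝓝 (0:ℝ), t ∈ Ioo (-(ρ/3)) (ρ/3) := Ioo_mem_nhds (by linarith) (by linarith)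
      filter_upwards [this] with t ht using abs_lt.2 ht
    have hev3 : ∀ᶠ t in 𝓝[≠] (0:ℝ), t ≠ 0 := eventually_mem_nhdsWithin
    have hall : ∀ᶠ t in 𝓝[≠] (0:ℝ), dist (t⁻¹ • (φ (0 + t) - φ 0)) (deriv φ s) < ε/2 := by
      filter_upwards [hev, hev2, hev3] with t h3 h4 h5
      have := h2 s t (by rw [abs_of_pos hs'.1]; linarith)
      have h6 : dist (t⁻¹ • (φ (0 + t) - φ 0)) (t⁻¹ • (φ (s + t) - φ s)) ≤ |K2| * s := by
        rw [Real.dist_eq, smul_eq_mul, smul_eq_mul, ← mul_sub, abs_mul, abs_inv,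
          inv_mul_le_iff₀ (abs_pos.2 h5), abs_sub_comm, zero_add]
        rw [abs_of_pos hs'.1] at this
        calc |φ (s + t) - φ s - (φ t - φ 0)| = |φ (s + t) - φ s - φ t + φ 0| := by ring_nf
          _ ≤ K2 * s * |t| := this
          _ ≤ |K2| * s * |t| := by
            have := hs'.1
            gcongr
            exact le_abs_self _
          _ = _ := by ring
      have h7 : |K2| * s ≤ ε/4 := by
        rw [lt_div_iff₀ (by positivity)] at hsε
        nlinarith [abs_nonneg K2, hs'.1]
      calc _ ≤ _ := dist_triangle _ (t⁻¹ • (φ (s + t) - φ s)) _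
        _ < _ := by linarith
    refine ⟨_, image_mem_map hall, ?_⟩
    rintro _ ⟨x, hx, rfl⟩ _ ⟨y, hy, rfl⟩
    simp only [mem_ofPred_eq] at hx hy
    have := dist_triangle_right (x⁻¹ • (φ (0 + x) - φ 0)) (y⁻¹ • (φ (0 + y) - φ 0)) (deriv φ s)
    linarith
  obtain ⟨g, hg⟩ := cauchy_map_iff_exists_tendsto.1 key
  exact ⟨g, hasDerivAt_iff_tendsto_slope_zero.2 hg⟩

/-- Partial derivative. -/
def pd {n : ℕ} (i : Fin n) (f : En n → ℝ) (z : En n) : ℝ := deriv (fun s : ℝ => f (z + s • ee i)) 0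

lemma norm_line {n : ℕ} (z : En n) (i : Fin n) (s : ℝ) : ‖z + s • ee i‖ ≤ ‖z‖ + |s| := by
  have := norm_add_le z (s • ee i)
  rwa [norm_smul_ee] at this

lemma hasDerivAt_pd0 {n : ℕ} {K1 K2 r : ℝ} {f : En n → ℝ} (h1 : DB 1 K1 r f) (h2 : DB 2 K2 r f)
    (z : En n) (hz : ‖z‖ < r) (i : Fin n) :
    HasDerivAt (fun s : ℝ => f (z + s • ee i)) (pd i f z) 0 := by
  obtain ⟨g, hg⟩ := exists_deriv_line (fun s : ℝ => f (z + s • ee i)) (r - ‖z‖) K1 K2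
    (by linarith) (fun s h hs => by
      have := h1.bound1 (z + s • ee i) i h (by have := norm_line z i s; linarith)
      rwa [add_assoc, ← add_smul] at this)
    (fun a b hab => by
      have := h2.bound2 z i i a b (by linarith)
      simp only [add_smul, zero_smul, add_zero, ← add_assoc]
      exact this)
  rw [pd, hg.deriv]; exact hg

lemma hasDerivAt_pd {n : ℕ} {K1 K2 r : ℝ} {f : En n → ℝ} (h1 : DB 1 K1 r f) (h2 : DB 2 K2 r f)
    (z : En n) (i : Fin n) (s : ℝ) (hz : ‖z‖ + |s| < r) :
    HasDerivAt (fun s : ℝ => f (z + s • ee i)) (pd i f (z + s • ee i)) s := by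
  have h := hasDerivAt_pd0 h1 h2 (z + s • ee i) ((norm_line z i s).trans_lt hz) i
  have h3 := HasDerivAt.comp_sub_const (f := fun τ : ℝ => f (z + s • ee i + τ • ee i)) s s
    (by rw [sub_self]; exact h)
  refine h3.congr_of_eventuallyEq (Eventually.of_forall fun τ => ?_)
  simp only [add_assoc, ← add_smul, add_sub_cancel]

lemma tendsto_dq {n : ℕ} {K1 K2 r : ℝ} {f : En n → ℝ} (h1 : DB 1 K1 r f) (h2 : DB 2 K2 r f)
    (z : En n) (hz : ‖z‖ < r) (i : Fin n) :
    Tendsto (fun h : ℝ => dq i h f z) (𝓝[≠] 0) (𝓝 (pd i f z)) := by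
  have := hasDerivAt_iff_tendsto_slope_zero.1 (hasDerivAt_pd0 h1 h2 z hz i)
  refine this.congr fun t => ?_
  simp [dq, div_eq_inv_mul]

lemma DB.pd {n : ℕ} {m : ℕ} {K K1 K2 r : ℝ} {f : En n → ℝ} (h1 : DB 1 K1 r f) (h2 : DB 2 K2 r f)
    (hf : DB (m + 1) K r f) (i : Fin n) : DB m K r (pd i f) := by
  refine DB.of_lt fun r' hr' => ?_
  refine DB.lim (l := 𝓝[≠] (0:ℝ)) (F := fun h => dq i h f) ?_ ?_
  · have h3 : ∀ᶠ t in 𝓝[≠] (0:ℝ), t ≠ 0 := eventually_mem_nhdsWithin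
    have h4 : ∀ᶠ t in 𝓝[≠] (0:ℝ), |t| < r - r' := by
      refine nhdsWithin_le_nhds ?_
      have : ∀ᶠ t in 𝓝 (0:ℝ), t ∈ Ioo (-(r - r')) (r - r') :=
        Ioo_mem_nhds (by linarith) (by linarith)
      filter_upwards [this] with t ht using abs_lt.2 ht
    filter_upwards [h3, h4] with t h3 h4
    exact (hf i t h3).mono le_rfl (by linarith)
  · exact fun z hz => tendsto_dq h1 h2 z (hz.trans hr') i

lemma DB.rate {n : ℕ} {K1 K2 r : ℝ} {f : En n → ℝ} (h1 : DB 1 K1 r f) (h2 : DB 2 K2 r f)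
    (z : En n) (i : Fin n) (h : ℝ) (hz : ‖z‖ + |h| < r) :
    |f (z + h • ee i) - f z - h * _root_.pd i f z| ≤ K2 * |h| * |h| := by
  have hp := DB.pd h1 h2 h2 i
  have hs : ∀ s ∈ uIcc 0 h, |s| ≤ |h| := by
    intro s hs
    have := abs_sub_left_of_mem_uIcc hs
    simpa using this
  have hd : ∀ s ∈ uIcc 0 h, HasDerivWithinAt (fun s : ℝ => f (z + s • ee i) - s * _root_.pd i f z)
      (_root_.pd i f (z + s • ee i) - 1 * _root_.pd i f z) (uIcc 0 h) s := by
    intro s hs'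
    have := hasDerivAt_pd h1 h2 z i s (by have := hs s hs'; linarith)
    exact (this.sub ((hasDerivAt_id s).mul_const _)).hasDerivWithinAt
  have hK : 0 ≤ K2 ∨ h = 0 := by
    by_cases h0 : h = 0
    · exact Or.inr h0
    left
    have := hp.bound1 z i h hz
    have h3 := (abs_nonneg _).trans this
    exact nonneg_of_mul_nonneg_left h3 (abs_pos.2 h0)
  rcases hK with hK | rfl
  swap
  · simp
  have := Convex.norm_image_sub_le_of_norm_hasDerivWithin_le (C := K2 * |h|) hd (fun s hs' => by
    have h3 := hs s hs'
    have := hp.bound1 z i s (by linarith)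
    rw [one_mul]
    exact this.trans (by gcongr)) (convex_uIcc 0 h) left_mem_uIcc right_mem_uIcc
  simp only [zero_smul, add_zero, zero_mul, sub_zero, Real.norm_eq_abs] at this
  convert this using 2
  ring

lemma norm_zS {n : ℕ} (z v : En n) (S : Finset (Fin n)) :
    ‖z + ∑ i ∈ S, v i • ee i‖ ≤ ‖z‖ + S.card * ‖v‖ := by
  refine (norm_add_le _ _).trans ?_
  gcongr
  refine (norm_sum_le _ _).trans ?_
  rw [← nsmul_eq_mul]
  refine Finset.sum_le_card_nsmul _ _ _ fun i _ => ?_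
  rw [norm_smul_ee]
  exact PiLp.norm_apply_le v i

lemma DB.tele1 {n : ℕ} {K r : ℝ} {f : En n → ℝ} (hK : 0 ≤ K) (h1 : DB 1 K r f) (z v : En n)
    (hz : ‖z‖ + n * ‖v‖ < r) (S : Finset (Fin n)) :
    |f (z + ∑ i ∈ S, v i • ee i) - f z| ≤ S.card * (K * ‖v‖) := by
  induction S using Finset.induction_on with
  | empty => simp
  | insert j S hj ih =>
    have hc : ((insert j S).card : ℝ) ≤ n := by
      exact_mod_cast (Finset.card_le_univ _).trans (by simp)
    rw [Finset.card_insert_of_notMem hj] at hc ⊢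
    push_cast at hc ⊢
    rw [Finset.sum_insert hj, add_comm (v j • ee j), ← add_assoc]
    have hvj : |v j| ≤ ‖v‖ := PiLp.norm_apply_le v j
    have := h1.bound1 (z + ∑ i ∈ S, v i • ee i) j (v j) (by
      have := norm_zS z v S
      nlinarith [norm_nonneg v])
    have h3 := abs_sub_le (f (z + ∑ i ∈ S, v i • ee i + v j • ee j)) (f (z + ∑ i ∈ S, v i • ee i))
      (f z)
    have h4 : K * |v j| ≤ K * ‖v‖ := by gcongr
    linarith

lemma DB.tele2 {n : ℕ} {K1 K r : ℝ} {f : En n → ℝ} (hK : 0 ≤ K) (h1 : DB 1 K1 r f)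
    (h2 : DB 2 K r f) (z v : En n)
    (hz : ‖z‖ + n * ‖v‖ < r) (S : Finset (Fin n)) :
    |f (z + ∑ i ∈ S, v i • ee i) - f z - ∑ i ∈ S, v i * _root_.pd i f z| ≤
      S.card * ((n + 1) * K * ‖v‖ ^ 2) := by
  induction S using Finset.induction_on with
  | empty => simp
  | insert j S hj ih =>
    have hc : ((insert j S).card : ℝ) ≤ n := by
      exact_mod_cast (Finset.card_le_univ _).trans (by simp)
    rw [Finset.card_insert_of_notMem hj] at hc ⊢
    push_cast at hc ⊢
    rw [Finset.sum_insert hj, Finset.sum_insert hj, add_comm (v j • ee j), ← add_assoc]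
    have hvj : |v j| ≤ ‖v‖ := PiLp.norm_apply_le v j
    set w := z + ∑ i ∈ S, v i • ee i with hw
    have h3 := h1.rate h2 w j (v j) (by
      have := norm_zS z v S
      nlinarith [norm_nonneg v])
    have h4 := (DB.pd h1 h2 h2 j).tele1 hK z v hz S
    rw [← hw] at h4
    have h5 : |v j * (_root_.pd j f w - _root_.pd j f z)| ≤ n * K * ‖v‖ ^ 2 := by
      rw [abs_mul]
      calc |v j| * |_root_.pd j f w - _root_.pd j f z| ≤ ‖v‖ * (S.card * (K * ‖v‖)) := by gcongr
        _ ≤ ‖v‖ * (n * (K * ‖v‖)) := by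
            have : (S.card : ℝ) ≤ n := by linarith
            gcongr
        _ = _ := by ring
    have h6 : K * |v j| * |v j| ≤ K * ‖v‖ ^ 2 := by
      calc K * |v j| * |v j| ≤ K * ‖v‖ * ‖v‖ := by gcongr
        _ = _ := by ring
    have e : f (w + v j • ee j) - f z - (v j * _root_.pd j f z + ∑ i ∈ S, v i * _root_.pd i f z) =
        (f (w + v j • ee j) - f w - v j * _root_.pd j f w) +
        (v j * (_root_.pd j f w - _root_.pd j f z)) +
        (f w - f z - ∑ i ∈ S, v i * _root_.pd i f z) := by ring
    rw [e]
    refine (abs_add_three _ _ _).trans ?_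
    linarith

/-- Coordinate functional. -/
def cf {n : ℕ} (i : Fin n) : En n →L[ℝ] ℝ := EuclideanSpace.proj i

lemma sum_ee {n : ℕ} (v : En n) : ∑ i, v i • ee i = v := by
  have := (EuclideanSpace.basisFun (Fin n) ℝ).sum_repr v
  simpa [ee] using this

lemma norm_cf {n : ℕ} (i : Fin n) : ‖cf (n := n) i‖ ≤ 1 := by
  refine ContinuousLinearMap.opNorm_le_bound _ zero_le_one fun x => ?_
  rw [one_mul]; exact PiLp.norm_apply_le x i

lemma DB.hasFDerivAt {n : ℕ} {K1 K r : ℝ} {f : En n → ℝ} (h1 : DB 1 K1 r f)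
    (h2 : DB 2 K r f) (z : En n) (hz : ‖z‖ < r) :
    HasFDerivAt f (∑ i, _root_.pd i f z • cf i) z := by
  have h2' : DB 2 |K| r f := h2.mono (le_abs_self K) le_rfl
  rw [hasFDerivAt_iff_isLittleO_nhds_zero]
  refine Asymptotics.IsBigO.trans_isLittleO (g := fun v : En n => ‖v‖ ^ 2) ?_
    (Asymptotics.isLittleO_norm_pow_id one_lt_two)
  refine Asymptotics.IsBigO.of_bound (n * ((n + 1) * |K|)) ?_
  have hev : ∀ᶠ v in 𝓝 (0 : En n), ‖z‖ + n * ‖v‖ < r := by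
    have : ContinuousAt (fun v : En n => ‖z‖ + n * ‖v‖) 0 := by fun_prop
    refine this.eventually_lt_const ?_
    simpa using hz
  filter_upwards [hev] with v hv
  have := h1.tele2 (abs_nonneg K) h2' z v hv Finset.univ
  rw [sum_ee] at this
  simp only [Finset.card_univ, Fintype.card_fin] at this
  rw [Real.norm_eq_abs, Real.norm_eq_abs, abs_of_nonneg (by positivity : 0 ≤ ‖v‖ ^ 2)]
  have e : (∑ i, _root_.pd i f z • cf i) v = ∑ i, v i * _root_.pd i f z := by
    simp [cf, mul_comm]
  rw [e]
  refine this.trans (le_of_eq (by ring))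

lemma DB.contDiffAt {n : ℕ} {r : ℝ} {f : En n → ℝ} (hf : ∀ m, ∃ K, DB m K r f) (k : ℕ) (z : En n)
    (hz : ‖z‖ < r) : ContDiffAt ℝ k f z := by
  induction k generalizing f z with
  | zero =>
    obtain ⟨K1, h1⟩ := hf 1
    obtain ⟨K2, h2⟩ := hf 2
    have ho : IsOpen {z : En n | ‖z‖ < r} := isOpen_lt continuous_norm continuous_const
    have : ContDiffOn ℝ 0 f {z : En n | ‖z‖ < r} := contDiffOn_zero.2 fun y hy =>
      (h1.hasFDerivAt h2 y hy).continuousAt.continuousWithinAt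
    exact this.contDiffAt (ho.mem_nhds hz)
  | succ k ih =>
    obtain ⟨K1, h1⟩ := hf 1
    obtain ⟨K2, h2⟩ := hf 2
    have ho : IsOpen {z : En n | ‖z‖ < r} := isOpen_lt continuous_norm continuous_const
    refine contDiffAt_succ_iff_hasFDerivAt.2 ⟨fun y => ∑ i, _root_.pd i f y • cf i,
      ⟨_, ho.mem_nhds hz, fun y hy => h1.hasFDerivAt h2 y hy⟩, ?_⟩
    refine ContDiffAt.sum fun i _ => ?_
    refine ContDiffAt.smul (ih (fun m => ?_) z hz) contDiffAt_const
    obtain ⟨K, hK⟩ := hf (m + 1)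
    exact ⟨K, DB.pd h1 h2 hK i⟩

lemma DB.norm_succ {n : ℕ} {r : ℝ} {f : En n → ℝ} (hf : ∀ m, ∃ K, DB m K r f) (k : ℕ) (z : En n)
    (hz : ‖z‖ < r) : ‖iteratedFDeriv ℝ (k + 1) f z‖ ≤
      ∑ i, ‖iteratedFDeriv ℝ k (_root_.pd i f) z‖ := by
  obtain ⟨K1, h1⟩ := hf 1
  obtain ⟨K2, h2⟩ := hf 2
  have ho : IsOpen {z : En n | ‖z‖ < r} := isOpen_lt continuous_norm continuous_const
  rw [← norm_iteratedFDeriv_fderiv]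
  have e : fderiv ℝ f =ᶠ[𝓝 z] fun y => ∑ i, _root_.pd i f y • cf i := by
    filter_upwards [ho.mem_nhds hz] with y hy
    exact (h1.hasFDerivAt h2 y hy).fderiv
  rw [(e.iteratedFDeriv ℝ k).eq_of_nhds]
  have hc : ∀ i, ContDiffAt ℝ k (_root_.pd i f) z := fun i => by
    refine DB.contDiffAt (fun m => ?_) k z hz
    obtain ⟨K, hK⟩ := hf (m + 1)
    exact ⟨K, DB.pd h1 h2 hK i⟩
  have hL : ∀ i, (fun y => _root_.pd i f y • cf i) =
      (ContinuousLinearMap.toSpanSingleton ℝ (cf (n := n) i)) ∘ (_root_.pd i f) := fun i => by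
    ext y; simp
  rw [iteratedFDeriv_fun_sum_apply (f := fun i y => _root_.pd i f y • cf i)
    (fun i _ => (hc i).smul contDiffAt_const)]
  refine (norm_sum_le _ _).trans (Finset.sum_le_sum fun i _ => ?_)
  rw [hL]
  refine (ContinuousLinearMap.norm_iteratedFDeriv_comp_left _ (hc i) le_rfl).trans ?_
  rw [ContinuousLinearMap.norm_toSpanSingleton]
  exact mul_le_of_le_one_left (norm_nonneg _) (norm_cf i)

lemma DB.norm_le {n : ℕ} {r K : ℝ} {f : En n → ℝ} (hf : ∀ m, ∃ K, DB m K r f) (k : ℕ)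
    (hk : DB k K r f) (z : En n)
    (hz : ‖z‖ < r) : ‖iteratedFDeriv ℝ k f z‖ ≤ (n : ℝ) ^ k * K := by
  induction k generalizing f with
  | zero => simpa using hk z hz
  | succ k ih =>
    obtain ⟨K1, h1⟩ := hf 1
    obtain ⟨K2, h2⟩ := hf 2
    refine (DB.norm_succ hf k z hz).trans ?_
    refine (Finset.sum_le_card_nsmul _ _ ((n : ℝ) ^ k * K) fun i _ => ?_).trans ?_
    · refine ih (fun m => ?_) (DB.pd h1 h2 hk i)
      obtain ⟨K, hK⟩ := hf (m + 1)
      exact ⟨K, DB.pd h1 h2 hK i⟩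
    · simp [pow_succ]
      apply le_of_eq; ring

lemma DB.tendsto_pd {n : ℕ} {ι : Type*} {l : Filter ι} {r : ℝ} {F : ι → En n → ℝ}
    {K : ℕ → ℝ} (hF : ∀ᶠ j in l, ∀ m, DB m (K m) r (F j))
    (hl : ∀ z, ‖z‖ < r → Tendsto (fun j => F j z) l (𝓝 0)) (i : Fin n) (z : En n) (hz : ‖z‖ < r) :
    Tendsto (fun j => _root_.pd i (F j) z) l (𝓝 0) := by
  rw [Metric.tendsto_nhds]
  intro ε hε
  set h := min ((r - ‖z‖) / 2) (ε / (2 * (|K 2| + 1))) with hh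
  have hh0 : 0 < h := lt_min (by linarith) (by positivity)
  have hhr : h ≤ (r - ‖z‖) / 2 := min_le_left _ _
  have hhε : h ≤ ε / (2 * (|K 2| + 1)) := min_le_right _ _
  have hah : |h| = h := abs_of_pos hh0
  have hz' : ‖z‖ + |h| < r := by rw [hah]; linarith
  have t1 := (hl _ (norm_add_smul_ee z i h r (by linarith))).sub (hl z hz)
  rw [sub_zero, Metric.tendsto_nhds] at t1
  have t2 := t1 (h * (ε / 2)) (by positivity)
  filter_upwards [hF, t2] with j hj ht
  have hr := (hj 1).rate (hj 2) z i h hz'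
  rw [Real.dist_eq, sub_zero] at ht ⊢
  rw [hah] at hr
  have h3 : |h * _root_.pd i (F j) z| < h * ε := by
    have := abs_sub_le (h * _root_.pd i (F j) z) (F j (z + h • ee i) - F j z) 0
    rw [sub_zero, sub_zero, abs_sub_comm] at this
    have h4 : K 2 * h * h ≤ h * (ε / 2) := by
      rw [le_div_iff₀ (by positivity)] at hhε
      have h5 : K 2 * h ≤ |K 2| * h := by gcongr; exact le_abs_self (K 2)
      have h6 : K 2 * h ≤ ε / 2 := by linarith
      have h7 := mul_le_mul_of_nonneg_right h6 hh0.le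
      linarith
    linarith
  rw [abs_mul, hah] at h3
  exact lt_of_mul_lt_mul_left h3 hh0.le

lemma DB.tendsto_iter {n : ℕ} {ι : Type*} {l : Filter ι} {r : ℝ} {F : ι → En n → ℝ}
    {K : ℕ → ℝ} (hF : ∀ᶠ j in l, ∀ m, DB m (K m) r (F j))
    (hl : ∀ z, ‖z‖ < r → Tendsto (fun j => F j z) l (𝓝 0)) (k : ℕ) (z : En n) (hz : ‖z‖ < r) :
    Tendsto (fun j => ‖iteratedFDeriv ℝ k (F j) z‖) l (𝓝 0) := by
  induction k generalizing F K with
  | zero => simpa using (hl z hz).abs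
  | succ k ih =>
    have h1 : ∀ i, Tendsto (fun j => ‖iteratedFDeriv ℝ k (_root_.pd i (F j)) z‖) l (𝓝 0) := by
      intro i
      refine ih (K := fun m => K (m + 1)) ?_ ?_
      · filter_upwards [hF] with j hj m
        exact DB.pd (hj 1) (hj 2) (hj (m + 1)) i
      · exact fun z hz => DB.tendsto_pd hF hl i z hz
    have h2 := tendsto_finsetSum Finset.univ fun i _ => h1 i
    rw [Finset.sum_const_zero] at h2
    refine squeeze_zero' (Eventually.of_forall fun _ => norm_nonneg _) ?_ h2
    filter_upwards [hF] with j hj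
    exact DB.norm_succ (fun m => ⟨_, hj m⟩) k z hz

end

section
/-- The barrier profile. -/
def bar (s θ k x y : ℝ) : ℝ :=
  x * (x^2+y^2+θ) ^ (-1/2:ℝ) - k * y ^ (2*s) * (x * (x^2+y^2+θ) ^ (-3/2:ℝ))

def barx (s θ k x y : ℝ) : ℝ :=
  (x^2+y^2+θ) ^ (-1/2:ℝ) - x^2 * (x^2+y^2+θ) ^ (-3/2:ℝ) -
    k * y ^ (2*s) * ((x^2+y^2+θ) ^ (-3/2:ℝ) - 3 * x^2 * (x^2+y^2+θ) ^ (-5/2:ℝ))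

def barxx (s θ k x y : ℝ) : ℝ :=
  -3 * x * (x^2+y^2+θ) ^ (-3/2:ℝ) + 3 * x^3 * (x^2+y^2+θ) ^ (-5/2:ℝ) -
    k * y ^ (2*s) * (-9 * x * (x^2+y^2+θ) ^ (-5/2:ℝ) + 15 * x^3 * (x^2+y^2+θ) ^ (-7/2:ℝ))

def bary (s θ k x y : ℝ) : ℝ :=
  - x * y * (x^2+y^2+θ) ^ (-3/2:ℝ) -
    k * x * (2*s * y ^ (2*s-1) * (x^2+y^2+θ) ^ (-3/2:ℝ)
      - 3 * (y ^ (2*s) * y) * (x^2+y^2+θ) ^ (-5/2:ℝ))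

def baryy (s θ k x y : ℝ) : ℝ :=
  - x * (x^2+y^2+θ) ^ (-3/2:ℝ) + 3 * x * y^2 * (x^2+y^2+θ) ^ (-5/2:ℝ) -
    k * x * (2*s*(2*s-1) * y ^ (2*s-2) * (x^2+y^2+θ) ^ (-3/2:ℝ)
      - 6 * s * y ^ (2*s-1) * y * (x^2+y^2+θ) ^ (-5/2:ℝ)
      - 3 * (2 * s * y ^ (2*s-1) * y + y ^ (2*s)) * (x^2+y^2+θ) ^ (-5/2:ℝ)
      + 15 * y ^ (2*s) * y^2 * (x^2+y^2+θ) ^ (-7/2:ℝ))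

lemma hasDerivAt_N1 (p p' x y θ : ℝ) (hp : p - 1 = p') (hN : x^2+y^2+θ ≠ 0) :
    HasDerivAt (fun ξ : ℝ => (ξ^2+y^2+θ) ^ p) (2 * x * p * (x^2+y^2+θ) ^ p') x := by
  have h : HasDerivAt (fun ξ : ℝ => ξ^2+y^2+θ) (2 * x) x := by
    simpa using (((hasDerivAt_id x).pow 2).add_const (y^2)).add_const θ
  subst hp
  exact h.rpow_const (Or.inl hN)

lemma hasDerivAt_N2 (p p' x y θ : ℝ) (hp : p - 1 = p') (hN : x^2+y^2+θ ≠ 0) :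
    HasDerivAt (fun ξ : ℝ => (x^2+ξ^2+θ) ^ p) (2 * y * p * (x^2+y^2+θ) ^ p') y := by
  have h : HasDerivAt (fun ξ : ℝ => x^2+ξ^2+θ) (2 * y) y := by
    simpa using (((hasDerivAt_id y).pow 2).const_add (x^2)).add_const θ
  subst hp
  exact h.rpow_const (Or.inl hN)

lemma hasDerivAt_bar_x (s θ k x y : ℝ) (hN : x^2+y^2+θ ≠ 0) :
    HasDerivAt (fun ξ => bar s θ k ξ y) (barx s θ k x y) x := by
  have h1 := hasDerivAt_N1 (-1/2) (-3/2) x y θ (by norm_num) hN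
  have h3 := hasDerivAt_N1 (-3/2) (-5/2) x y θ (by norm_num) hN
  have hx := hasDerivAt_id x
  have := (hx.mul h1).sub ((hx.mul h3).const_mul (k * y ^ (2*s)))
  refine this.congr_deriv ?_
  simp only [barx, id]; ring

lemma hasDerivAt_bar_xx (s θ k x y : ℝ) (hN : x^2+y^2+θ ≠ 0) :
    HasDerivAt (fun ξ => barx s θ k ξ y) (barxx s θ k x y) x := by
  have h1 := hasDerivAt_N1 (-1/2) (-3/2) x y θ (by norm_num) hN
  have h3 := hasDerivAt_N1 (-3/2) (-5/2) x y θ (by norm_num) hN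
  have h5 := hasDerivAt_N1 (-5/2) (-7/2) x y θ (by norm_num) hN
  have hx : HasDerivAt (fun ξ : ℝ => ξ^2) (2 * x) x := by
    simpa using hasDerivAt_pow 2 x
  have := (h1.sub (hx.mul h3)).sub
    ((h3.sub ((hx.const_mul 3).mul h5)).const_mul (k * y ^ (2*s)))
  refine this.congr_deriv ?_
  simp only [barxx]; ring

lemma hasDerivAt_bar_y (s θ k x y : ℝ) (hy : 0 < y) (hN : x^2+y^2+θ ≠ 0) :
    HasDerivAt (fun η => bar s θ k x η) (bary s θ k x y) y := by
  have h1 := hasDerivAt_N2 (-1/2) (-3/2) x y θ (by norm_num) hN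
  have h3 := hasDerivAt_N2 (-3/2) (-5/2) x y θ (by norm_num) hN
  have hY : HasDerivAt (fun η : ℝ => η ^ (2*s)) (2*s * y ^ (2*s-1)) y :=
    Real.hasDerivAt_rpow_const (Or.inl hy.ne')
  have := (h1.const_mul x).sub ((hY.const_mul k).mul (h3.const_mul x))
  refine this.congr_deriv ?_
  simp only [bary]; ring

lemma hasDerivAt_bar_yy (s θ k x y : ℝ) (hy : 0 < y) (hN : x^2+y^2+θ ≠ 0) :
    HasDerivAt (fun η => bary s θ k x η) (baryy s θ k x y) y := by
  have h3 := hasDerivAt_N2 (-3/2) (-5/2) x y θ (by norm_num) hN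
  have h5 := hasDerivAt_N2 (-5/2) (-7/2) x y θ (by norm_num) hN
  have hY : HasDerivAt (fun η : ℝ => η ^ (2*s)) (2*s * y ^ (2*s-1)) y :=
    Real.hasDerivAt_rpow_const (Or.inl hy.ne')
  have hY1 : HasDerivAt (fun η : ℝ => η ^ (2*s-1)) ((2*s-1) * y ^ (2*s-2)) y := by
    have := Real.hasDerivAt_rpow_const (x := y) (p := 2*s-1) (Or.inl hy.ne')
    rwa [show 2*s-1-1 = 2*s-2 by ring] at this
  have hi := hasDerivAt_id y
  have := ((hi.const_mul (-x)).mul h3).sub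
    ((((hY1.const_mul (2*s)).mul h3).sub (((hY.mul hi).const_mul 3).mul h5)).const_mul (k*x))
  refine this.congr_deriv ?_
  simp only [baryy, id, Pi.mul_apply]; ring

lemma bar_super (s θ k x y : ℝ) (hs : 0 < s) (hs' : s < 1/2) (hθ : 0 ≤ θ) (hx : 0 ≤ x) (hy : 0 < y)
    (hk : k * y ^ (2*s) ≤ (x^2+y^2+θ)/5) :
    barxx s θ k x y + baryy s θ k x y + (1-2*s)/y * bary s θ k x y ≤ 0 := by
  have hN : 0 < x^2+y^2+θ := by positivity
  obtain ⟨N, hNdef⟩ : ∃ N, N = x^2+y^2+θ := ⟨_, rfl⟩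
  have e5 : N ^ (-5/2:ℝ) = N ^ (-7/2:ℝ) * N := by
    rw [← Real.rpow_add_one (by rw [hNdef]; exact hN.ne')]; norm_num
  have e3 : N ^ (-3/2:ℝ) = N ^ (-7/2:ℝ) * N^2 := by
    rw [← Real.rpow_natCast, ← Real.rpow_add (by rw [hNdef]; exact hN)]; norm_num
  have y1 : y ^ (2*s-1) = y ^ (2*s) / y := by rw [Real.rpow_sub_one hy.ne']
  have y2 : y ^ (2*s-2) = y ^ (2*s) / y^2 := by
    rw [Real.rpow_sub hy]; norm_num
  simp only [barxx, baryy, bary]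
  rw [← hNdef, e5, e3, y1, y2]
  rw [← hNdef] at hk hN
  have hP : 0 < N ^ (-7/2:ℝ) := Real.rpow_pos_of_pos hN _
  generalize N ^ (-7/2:ℝ) = P at *
  generalize y ^ (2*s) = Y at *
  have hid : -3 * x * (P * N^2) + 3 * x^3 * (P * N) -
      k * Y * (-9 * x * (P * N) + 15 * x^3 * P) +
      (- x * (P * N^2) + 3 * x * y^2 * (P * N) -
      k * x * (2*s*(2*s-1) * (Y / y^2) * (P * N^2)
      - 6 * s * (Y / y) * y * (P * N)
      - 3 * (2 * s * (Y / y) * y + Y) * (P * N)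
      + 15 * Y * y^2 * P)) + (1-2*s)/y * (- x * y * (P * N^2) -
      k * x * (2*s * (Y / y) * (P * N^2) - 3 * (Y * y) * (P * N)))
      = x * P * (- N * ((2-2*s)*N + 3 * θ) + 3 * (k * Y) * (2*s*N+5*θ)) := by
    have hth : θ = N - x^2 - y^2 := by rw [hNdef]; ring
    rw [hth]
    field_simp
    ring
  rw [hid]
  refine mul_nonpos_of_nonneg_of_nonpos (by positivity) ?_
  have h1 : 3 * (k * Y) * (2*s*N+5*θ) ≤ 3 * (N/5) * (2*s*N+5*θ) := by gcongr
  nlinarith [mul_pos hN hN, mul_nonneg hN.le hθ]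

lemma bar_k_le (s θ x y : ℝ) (hs : 0 < s) (hs' : s < 1/2) (hθ : 0 ≤ θ) (hy : 0 ≤ y) :
    θ ^ (1-s) * y ^ (2*s) ≤ x^2+y^2+θ := by
  have hN : 0 ≤ x^2+y^2+θ := by positivity
  have e : y ^ (2*s) = (y^2) ^ s := by
    rw [← Real.rpow_natCast y 2, ← Real.rpow_mul hy]; norm_num
  rw [e]
  calc θ ^ (1-s) * (y^2) ^ s ≤ (x^2+y^2+θ) ^ (1-s) * (x^2+y^2+θ) ^ s := by
        gcongr
        · linarith
        · nlinarith [sq_nonneg x, sq_nonneg y]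
        · nlinarith [sq_nonneg x]
    _ = x^2+y^2+θ := by
      rw [← Real.rpow_add' hN (by norm_num)]
      norm_num

lemma bar_nonneg (s θ k x y : ℝ) (hθ : 0 ≤ θ) (hx : 0 ≤ x)
    (hk : k * y ^ (2*s) ≤ (x^2+y^2+θ)/5) : 0 ≤ bar s θ k x y := by
  have hN : 0 ≤ x^2+y^2+θ := by positivity
  rcases hN.eq_or_lt with h0 | hN
  · have : x = 0 := by
      have : x^2 = 0 := by nlinarith [sq_nonneg x, sq_nonneg y]
      exact pow_eq_zero_iff (two_ne_zero) |>.1 this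
    simp [bar, this]
  · have e : (x^2+y^2+θ) ^ (-1/2:ℝ) = (x^2+y^2+θ) ^ (-3/2:ℝ) * (x^2+y^2+θ) := by
      rw [← Real.rpow_add_one hN.ne']; norm_num
    rw [bar, e]
    have hP : 0 < (x^2+y^2+θ) ^ (-3/2:ℝ) := Real.rpow_pos_of_pos hN _
    have : x * ((x^2+y^2+θ) ^ (-3/2:ℝ) * (x^2+y^2+θ)) -
      k * y ^ (2*s) * (x * (x^2+y^2+θ) ^ (-3/2:ℝ)) =
      x * (x^2+y^2+θ) ^ (-3/2:ℝ) * ((x^2+y^2+θ) - k * y ^ (2*s)) := by ring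
    rw [this]
    have h2 : 0 ≤ (x^2+y^2+θ) - k * y ^ (2*s) := by linarith
    positivity

lemma bar_le (s θ k x y : ℝ) (hθ : 0 < θ) (hk : 0 ≤ k) (hx : 0 ≤ x) (hy : 0 ≤ y) :
    bar s θ k x y ≤ x * θ ^ (-1/2:ℝ) := by
  have h1 : 0 ≤ k * y ^ (2*s) * (x * (x^2+y^2+θ) ^ (-3/2:ℝ)) := by positivity
  have h2 : (x^2+y^2+θ) ^ (-1/2:ℝ) ≤ θ ^ (-1/2:ℝ) :=
    Real.rpow_le_rpow_of_nonpos hθ (by nlinarith [sq_nonneg x, sq_nonneg y]) (by norm_num)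
  have := mul_le_mul_of_nonneg_left h2 hx
  rw [bar]; linarith

lemma bar_init (s k x : ℝ) (hs : 0 < s) (hx : 0 < x) : bar s 0 k x 0 = 1 := by
  rw [bar, Real.zero_rpow (by positivity)]
  have : (x^2+0^2+0) ^ (-1/2:ℝ) = x⁻¹ := by
    rw [show x^2+0^2+0 = x^2 by ring, ← Real.rpow_natCast x 2, ← Real.rpow_mul hx.le]
    norm_num
    exact Real.rpow_neg_one x
  rw [this]; field_simp; simp

lemma bary_limit (s θ k x : ℝ) (hs : 0 < s) (hs' : s < 1/2) (hθ : 0 ≤ θ) (hx : 0 < x) :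
    Tendsto (fun y : ℝ => y ^ (1-2*s) * bary s θ k x y) (𝓝[>] 0)
      (𝓝 (-(2*s*k*(x * (x^2+θ) ^ (-3/2:ℝ))))) := by
  have hc : ∀ p : ℝ, ContinuousAt (fun y : ℝ => (x^2+y^2+θ) ^ p) 0 := fun p => by
    refine ContinuousAt.rpow_const (by fun_prop) (Or.inl ?_)
    positivity
  have hN := hc (-3/2)
  have hN5 := hc (-5/2)
  have h1 : ContinuousAt (fun y : ℝ => y ^ (1-2*s)) 0 :=
    Real.continuousAt_rpow_const _ _ (Or.inr (by linarith))
  have hcont : ContinuousAt (fun y : ℝ => - x * y * (x^2+y^2+θ) ^ (-3/2:ℝ) * y ^ (1-2*s) -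
      k * x * (2*s * (x^2+y^2+θ) ^ (-3/2:ℝ) - 3 * y^2 * (x^2+y^2+θ) ^ (-5/2:ℝ))) 0 := by
    fun_prop
  have ht := (hcont.tendsto).mono_left (nhdsWithin_le_nhds (s := Ioi 0))
  have e0 : (- x * 0 * (x^2+0^2+θ) ^ (-3/2:ℝ) * (0:ℝ) ^ (1-2*s) -
      k * x * (2*s * (x^2+0^2+θ) ^ (-3/2:ℝ) - 3 * 0^2 * (x^2+0^2+θ) ^ (-5/2:ℝ))) =
      -(2*s*k*(x * (x^2+θ) ^ (-3/2:ℝ))) := by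
    rw [show x^2+0^2+θ = x^2+θ by ring]; ring
  rw [e0] at ht
  refine ht.congr' ?_
  filter_upwards [self_mem_nhdsWithin] with y hy
  have hy : 0 < y := hy
  have e1 : y ^ (1-2*s) * y ^ (2*s-1) = 1 := by
    rw [← Real.rpow_add hy]; norm_num
  have e2 : y ^ (1-2*s) * y ^ (2*s) = y := by
    rw [← Real.rpow_add hy]; norm_num
  simp only [bary]
  linear_combination (k * x * 2 * s * (x^2+y^2+θ) ^ (-3/2:ℝ)) * e1
    - (k * x * 3 * y * (x^2+y^2+θ) ^ (-5/2:ℝ)) * e2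

/-- time derivative of the barrier on `y = 0`. -/
lemma bar_time (s κ ti x t : ℝ) (hs : 0 < s) (hκ : 0 < κ) (ht : ti < t) (K : ℝ → ℝ)
    (hx : 0 < x) :
    HasDerivAt (fun τ => bar s ((κ * (τ - ti)) ^ (1/s)) (K τ) x 0)
      (-(κ/(2*s) * (κ * (t - ti)) ^ (1/s-1) * (x * (x^2 + (κ * (t - ti)) ^ (1/s)) ^ (-3/2:ℝ)))) t := by
  have hL : HasDerivAt (fun τ => κ * (τ - ti)) κ t := by
    simpa using ((hasDerivAt_id t).sub_const ti).const_mul κ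
  have hpos : 0 < κ * (t - ti) := mul_pos hκ (by linarith)
  have hθ := hL.rpow_const (p := 1/s) (Or.inl hpos.ne')
  have hN : x^2 + (κ * (t - ti)) ^ (1/s) ≠ 0 := by positivity
  have h1 := ((hθ.const_add (x^2)).rpow_const (p := -1/2) (Or.inl hN)).const_mul x
  have h0 : (fun τ => bar s ((κ * (τ - ti)) ^ (1/s)) (K τ) x 0) =
      fun τ => x * (x^2 + (κ * (τ - ti)) ^ (1/s)) ^ (-1/2:ℝ) := by
    funext τ
    rw [bar, Real.zero_rpow (by positivity)]
    simp
  rw [h0]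
  refine h1.congr_deriv ?_
  rw [show (-1/2 - 1 : ℝ) = -3/2 by norm_num]
  field_simp

end

section
lemma no_incr (φ φ' : ℝ → ℝ) (ε : ℝ) (hε : 0 < ε) (hc : ContinuousOn φ (Icc 0 ε))
    (hd : ∀ σ ∈ Ioo 0 ε, HasDerivAt φ (φ' σ) σ) (hp : ∀ σ ∈ Ioo 0 ε, 0 < φ' σ) : φ 0 < φ ε := by
  obtain ⟨c, hc1, hc2⟩ := exists_hasDerivAt_eq_slope φ φ' hε hc hd
  have := hp c hc1
  rw [hc2, lt_div_iff₀ (by linarith)] at this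
  linarith

lemma normal_max (φ φ' : ℝ → ℝ) (ℓ a : ℝ) (hc : ContinuousWithinAt φ (Ici 0) 0)
    (hd : ∀ᶠ σ in 𝓝[>] (0:ℝ), HasDerivAt φ (φ' σ) σ)
    (hl : Tendsto (fun σ : ℝ => σ ^ a * φ' σ) (𝓝[>] 0) (𝓝 ℓ))
    (hm : ∀ᶠ σ in 𝓝[>] (0:ℝ), φ σ ≤ φ 0) : ℓ ≤ 0 := by
  by_contra hpos
  push Not at hpos
  have h1 : ∀ᶠ σ in 𝓝[>] (0:ℝ), 0 < σ ^ a * φ' σ := hl.eventually_const_lt hpos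
  have h2 := (hd.and (h1.and hm))
  rw [eventually_nhdsWithin_iff, Metric.eventually_nhds_iff] at h2
  obtain ⟨ε, hε, h2⟩ := h2
  have h3 : ∀ σ ∈ Ioc 0 (ε/2), HasDerivAt φ (φ' σ) σ ∧ 0 < σ ^ a * φ' σ ∧ φ σ ≤ φ 0 := by
    intro σ hσ
    refine h2 ?_ hσ.1
    rw [Real.dist_eq, sub_zero, abs_of_pos hσ.1]; linarith [hσ.2]
  have h4 := no_incr φ φ' (ε/2) (by linarith) (fun σ hσ => by
      rcases hσ.1.eq_or_lt with h | h
      · subst h; exact hc.mono Icc_subset_Ici_self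
      · exact (h3 σ ⟨h, hσ.2⟩).1.continuousAt.continuousWithinAt)
    (fun σ hσ => (h3 σ ⟨hσ.1, hσ.2.le⟩).1)
    (fun σ hσ => by
      have := (h3 σ ⟨hσ.1, hσ.2.le⟩).2.1
      exact pos_of_mul_pos_right this (Real.rpow_nonneg hσ.1.le _))
  have := (h3 (ε/2) ⟨by linarith, le_rfl⟩).2.2
  linarith

lemma second_test (φ φ' : ℝ → ℝ) (c : ℝ) (hd : ∀ᶠ σ in 𝓝 (0:ℝ), HasDerivAt φ (φ' σ) σ)
    (hc : HasDerivAt φ' c 0) (hm : ∀ᶠ σ in 𝓝 (0:ℝ), φ σ ≤ φ 0) : c ≤ 0 ∧ φ' 0 = 0 := by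
  have hl : IsLocalMax φ 0 := hm
  have h0 : φ' 0 = 0 := hl.hasDerivAt_eq_zero hd.self_of_nhds
  refine ⟨?_, h0⟩
  have ht := hasDerivAt_iff_tendsto_slope_zero.1 hc
  simp only [zero_add, h0, sub_zero, smul_eq_mul] at ht
  have ht' := ht.mono_left (nhdsWithin_mono 0 (fun x (hx : 0 < x) => hx.ne') :
    𝓝[>] (0:ℝ) ≤ 𝓝[≠] 0)
  refine normal_max φ φ' c (-1) hd.self_of_nhds.continuousAt.continuousWithinAt
    (nhdsWithin_le_nhds hd) ?_ (nhdsWithin_le_nhds hm)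
  simpa only [Real.rpow_neg_one] using ht'

lemma left_max (f : ℝ → ℝ) (d ti t : ℝ) (ht : ti < t) (hd : HasDerivWithinAt f d (Icc ti t) t)
    (hm : ∀ τ ∈ Icc ti t, f τ ≤ f t) : 0 ≤ d := by
  have h1 : HasDerivWithinAt f d (Ico ti t) t := hd.mono Ico_subset_Icc_self
  rw [hasDerivWithinAt_iff_tendsto_slope' (by simp)] at h1
  haveI := right_nhdsWithin_Ico_neBot ht
  refine ge_of_tendsto h1 ?_
  filter_upwards [self_mem_nhdsWithin] with τ hτ
  have := hm τ ⟨hτ.1, hτ.2.le⟩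
  rw [slope_def_field]
  exact div_nonneg_of_nonpos (by linarith) (by linarith [hτ.2])

variable {n : ℕ}

lemma line_tendsto (p v : En n × ℝ) : Tendsto (fun σ : ℝ => p + σ • v) (𝓝 0) (𝓝 p) := by
  have : ContinuousAt (fun σ : ℝ => p + σ • v) 0 := by fun_prop
  simpa [ContinuousAt] using this

lemma line_hasDerivAt (p v : En n × ℝ) (σ : ℝ) : HasDerivAt (fun σ : ℝ => p + σ • v) v σ := by
  simpa using ((hasDerivAt_id σ).smul_const v).const_add p

lemma slice1 {f : En n × ℝ → ℝ} {p v : En n × ℝ} (hf : ContDiffAt ℝ 2 f p) :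
    ∀ᶠ σ in 𝓝 (0:ℝ), HasDerivAt (fun σ : ℝ => f (p + σ • v)) (fderiv ℝ f (p + σ • v) v) σ := by
  have h1 : ∀ᶠ q in 𝓝 p, ContDiffAt ℝ 2 f q := hf.eventually (by simp)
  filter_upwards [(line_tendsto p v).eventually h1] with σ hσ
  exact ((hσ.differentiableAt (by simp)).hasFDerivAt).comp_hasDerivAt σ (line_hasDerivAt p v σ)

lemma fderiv_diff {f : En n × ℝ → ℝ} {p : En n × ℝ} (v : En n × ℝ) (hf : ContDiffAt ℝ 2 f p) :
    DifferentiableAt ℝ (fun q => fderiv ℝ f q v) p := by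
  have : ContDiffAt ℝ 1 (fderiv ℝ f) p := hf.fderiv_right (by norm_num)
  exact (this.differentiableAt (by simp)).clm_apply (differentiableAt_const v)

lemma slice2 {f : En n × ℝ → ℝ} {p v : En n × ℝ} (hf : ContDiffAt ℝ 2 f p) :
    HasDerivAt (fun σ : ℝ => fderiv ℝ f (p + σ • v) v) (D2 f p v) 0 := by
  have h1 := (fderiv_diff v hf).hasFDerivAt
  have h2 : HasFDerivAt (fun q => fderiv ℝ f q v) (fderiv ℝ (fun q => fderiv ℝ f q v) p)
      (p + (0:ℝ) • v) := by simpa using h1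
  exact h2.comp_hasDerivAt 0 (line_hasDerivAt p v 0)

lemma test2 {f : En n × ℝ → ℝ} {p q v v' : En n × ℝ} (hp : ContDiffAt ℝ 2 f p)
    (hq : ContDiffAt ℝ 2 f q) (ψ ψ' : ℝ → ℝ) (c : ℝ)
    (hψ : ∀ᶠ σ in 𝓝 (0:ℝ), HasDerivAt ψ (ψ' σ) σ) (hψ' : HasDerivAt ψ' c 0)
    (hm : ∀ᶠ σ in 𝓝 (0:ℝ), f (p + σ • v) - f (q + σ • v') - ψ σ ≤ f p - f q - ψ 0) :
    D2 f p v - D2 f q v' ≤ c ∧ fderiv ℝ f p v - fderiv ℝ f q v' = ψ' 0 := by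
  have := second_test (fun σ => f (p + σ • v) - f (q + σ • v') - ψ σ)
    (fun σ => fderiv ℝ f (p + σ • v) v - fderiv ℝ f (q + σ • v') v' - ψ' σ)
    (D2 f p v - D2 f q v' - c)
    (by
      filter_upwards [slice1 (v := v) hp, slice1 (v := v') hq, hψ] with σ h1 h2 h3
      exact (h1.sub h2).sub h3)
    (((slice2 hp).sub (slice2 hq)).sub hψ') (by simpa using hm)
  simp only [zero_smul, add_zero] at this
  constructor <;> linarith [this.1, this.2]

lemma D2_neg {f : En n × ℝ → ℝ} {p : En n × ℝ} (v : En n × ℝ) (hf : ContDiffAt ℝ 2 f p) :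
    D2 f p (-v) = D2 f p v := by
  have e : (fun q => fderiv ℝ f q (-v)) = fun q => - fderiv ℝ f q v := by
    funext q; simp
  rw [D2, e, fderiv_fun_neg]
  simp [D2]

/-- Reflection in the `i`-th coordinate about `x0`. -/
def rf (x0 : En n) (i : Fin n) (x : En n) : En n := x + (2 * (x0 i - x i)) • ee i

lemma ee_apply (i j : Fin n) : (ee i : En n) j = if j = i then 1 else 0 := by
  simp [ee]

lemma norm_sq_add (q : En n) (j : Fin n) (σ : ℝ) :
    ‖q + σ • ee j‖ ^ 2 = ‖q‖ ^ 2 + 2 * σ * q j + σ ^ 2 := by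
  rw [norm_add_sq_real, norm_smul_ee, inner_smul_right, ee, EuclideanSpace.inner_single_right, sq_abs]
  simp
  ring

lemma norm_rf (x0 : En n) (i : Fin n) (x : En n) : ‖rf x0 i x - x0‖ = ‖x - x0‖ := by
  have e : rf x0 i x - x0 = (x - x0) + (2 * (x0 i - x i)) • ee i := by rw [rf]; abel
  have h := norm_sq_add (x - x0) i (2 * (x0 i - x i))
  rw [← e] at h
  have h2 : ‖rf x0 i x - x0‖ ^ 2 = ‖x - x0‖ ^ 2 := by
    rw [h]; simp only [PiLp.sub_apply]; ring
  exact (sq_eq_sq₀ (norm_nonneg _) (norm_nonneg _)).1 h2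

lemma rf_add_same (x0 : En n) (i : Fin n) (x : En n) (σ : ℝ) :
    rf x0 i (x + σ • ee i) = rf x0 i x + σ • (-ee i) := by
  simp only [rf, PiLp.add_apply, PiLp.smul_apply, ee_apply, if_true, smul_eq_mul, mul_one]
  module

lemma rf_add_ne (x0 : En n) (i j : Fin n) (hij : j ≠ i) (x : En n) (σ : ℝ) :
    rf x0 i (x + σ • ee j) = rf x0 i x + σ • ee j := by
  simp only [rf, PiLp.add_apply, PiLp.smul_apply, ee_apply, if_neg hij.symm, smul_eq_mul, mul_zero,
    add_zero]
  abel

/-- Spatial part of the barrier. -/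
def Ps (s θ k A B G : ℝ) (x0 : En n) (y0 : ℝ) (i : Fin n) (p : En n × ℝ) : ℝ :=
  bar s θ k (p.1 i - x0 i) p.2 + A * (p.1 i - x0 i) - B * (p.1 i - x0 i) ^ 2 +
    G * (‖p.1 - x0‖ ^ 2 + (p.2 - y0) ^ 2)

lemma Ps_i (s θ k A B G : ℝ) (x0 : En n) (y0 : ℝ) (i : Fin n) (x : En n) (y σ : ℝ) :
    Ps s θ k A B G x0 y0 i ((x, y) + σ • (ee i, (0:ℝ))) =
      bar s θ k (x i - x0 i + σ) y + A * (x i - x0 i + σ) - B * (x i - x0 i + σ) ^ 2 +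
      G * (‖x - x0‖ ^ 2 + 2 * σ * (x i - x0 i) + σ ^ 2 + (y - y0) ^ 2) := by
  have h := norm_sq_add (x - x0) i σ
  simp only [PiLp.sub_apply] at h
  simp only [Ps, Prod.smul_mk, Prod.mk_add_mk, smul_zero, add_zero, PiLp.add_apply,
    PiLp.smul_apply, ee_apply, if_true, smul_eq_mul, mul_one, mul_zero]
  rw [add_sub_right_comm x, h, add_sub_right_comm (x i)]

lemma Ps_ne (s θ k A B G : ℝ) (x0 : En n) (y0 : ℝ) (i j : Fin n) (hij : j ≠ i) (x : En n)
    (y σ : ℝ) :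
    Ps s θ k A B G x0 y0 i ((x, y) + σ • (ee j, (0:ℝ))) =
      bar s θ k (x i - x0 i) y + A * (x i - x0 i) - B * (x i - x0 i) ^ 2 +
      G * (‖x - x0‖ ^ 2 + 2 * σ * (x j - x0 j) + σ ^ 2 + (y - y0) ^ 2) := by
  have h := norm_sq_add (x - x0) j σ
  simp only [PiLp.sub_apply] at h
  simp only [Ps, Prod.smul_mk, Prod.mk_add_mk, smul_zero, add_zero, PiLp.add_apply,
    PiLp.smul_apply, ee_apply, if_neg hij.symm, smul_eq_mul, mul_zero]
  rw [add_sub_right_comm x, h]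

lemma interior_contra (s θ k A B G : ℝ) (x0 : En n) (y0 : ℝ) (i : Fin n) (f : En n × ℝ → ℝ)
    (x : En n) (y : ℝ) (hs : 0 < s) (hs' : s < 1/2) (hθ : 0 ≤ θ) (hx : 0 < x i - x0 i) (hy : 0 < y)
    (hk : k * y ^ (2*s) ≤ ((x i - x0 i)^2+y^2+θ)/5) (hG : 0 < G) (hB : B = G * (n + 3))
    (hy0 : 0 ≤ y0)
    (hp : ContDiffAt ℝ 2 f (x, y)) (hq : ContDiffAt ℝ 2 f (rf x0 i x, y))
    (ep : lap f (x, y) + (1-2*s)/y * fderiv ℝ f (x, y) (0,1) = 0)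
    (eq : lap f (rf x0 i x, y) + (1-2*s)/y * fderiv ℝ f (rf x0 i x, y) (0,1) = 0)
    (hm : ∀ᶠ p in 𝓝 (x, y), f p - f (rf x0 i p.1, p.2) - Ps s θ k A B G x0 y0 i p ≤
      f (x, y) - f (rf x0 i x, y) - Ps s θ k A B G x0 y0 i (x, y)) : False := by
  set X := x i - x0 i with hX
  have hN : ∀ᶠ σ in 𝓝 (0:ℝ), (X + σ)^2+y^2+θ ≠ 0 := Eventually.of_forall fun σ => by positivity
  have hlin : ∀ σ : ℝ, HasDerivAt (fun σ : ℝ => X + σ) 1 σ := fun σ => by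
    simpa using (hasDerivAt_id σ).const_add X
  have hpow : ∀ σ : ℝ, HasDerivAt (fun σ : ℝ => (X + σ) ^ 2) (2 * (X + σ)) σ := fun σ => by
    simpa using (hlin σ).fun_pow 2
  have hq2 : ∀ (c σ : ℝ), HasDerivAt (fun σ : ℝ => G * (‖x - x0‖ ^ 2 + 2 * σ * c + σ ^ 2 + (y - y0) ^ 2))
      (G * (2 * c + 2 * σ)) σ := fun c σ => by
    have h1 : HasDerivAt (fun σ : ℝ => 2 * σ * c) (2 * c) σ := by
      simpa using ((hasDerivAt_id σ).const_mul 2).mul_const c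
    have h2 : HasDerivAt (fun σ : ℝ => σ ^ 2) (2 * σ) σ := by simpa using hasDerivAt_pow 2 σ
    exact (((h1.const_add _).add h2).add_const _).const_mul G
  have hq2' : ∀ (c : ℝ), HasDerivAt (fun σ : ℝ => G * (2 * c + 2 * σ)) (2 * G) 0 := fun c => by
    have := (((hasDerivAt_id (0:ℝ)).const_mul 2).const_add (2 * c)).const_mul G
    refine this.congr_deriv (by ring)
  -- direction i
  have Ti := test2 (v := (ee i, 0)) (v' := (-ee i, 0)) hp hq
    (fun σ => Ps s θ k A B G x0 y0 i ((x, y) + σ • (ee i, (0:ℝ))))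
    (fun σ => barx s θ k (X + σ) y + A - B * (2 * (X + σ)) + G * (2 * X + 2 * σ))
    (barxx s θ k X y - 2 * B + 2 * G)
    (by
      simp only [Ps_i]
      filter_upwards [hN] with σ hσ
      have h1 := (hasDerivAt_bar_x s θ k (X + σ) y hσ).comp_const_add X σ
      refine (((h1.add ((hlin σ).const_mul A)).sub ((hpow σ).const_mul B)).add
        (hq2 X σ)).congr_deriv (by ring))
    (by
      have h1 : HasDerivAt (fun σ => barx s θ k (X + σ) y) (barxx s θ k X y) 0 := by
        have := (hasDerivAt_bar_xx s θ k (X + 0) y hN.self_of_nhds).comp_const_add X 0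
        rwa [add_zero] at this
      have := ((h1.add_const A).sub (((hlin 0).const_mul 2).const_mul B)).add (hq2' X)
      refine this.congr_deriv (by ring))
    (by
      filter_upwards [(line_tendsto (x, y) (ee i, 0)).eventually hm] with σ hσ
      have e : ((rf x0 i x, y) + σ • (-ee i, (0:ℝ)) : En n × ℝ) =
        (rf x0 i ((x, y) + σ • (ee i, (0:ℝ)) : En n × ℝ).1,
          ((x, y) + σ • (ee i, (0:ℝ)) : En n × ℝ).2) := by
        simp [rf_add_same]
      rw [e]
      simpa using hσ)
  have Tj : ∀ j, j ≠ i → D2 f (x, y) (ee j, 0) - D2 f (rf x0 i x, y) (ee j, 0) ≤ 2 * G := by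
    intro j hj
    refine (test2 (v := (ee j, 0)) (v' := (ee j, 0)) hp hq
      (fun σ => Ps s θ k A B G x0 y0 i ((x, y) + σ • (ee j, (0:ℝ))))
      (fun σ => G * (2 * (x j - x0 j) + 2 * σ)) (2 * G) ?_ (hq2' _) ?_).1
    · simp only [Ps_ne _ _ _ _ _ _ _ _ _ _ hj]
      exact Eventually.of_forall fun σ => (hq2 _ σ).const_add _
    · filter_upwards [(line_tendsto (x, y) (ee j, 0)).eventually hm] with σ hσ
      have e : ((rf x0 i x, y) + σ • (ee j, (0:ℝ)) : En n × ℝ) =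
        (rf x0 i ((x, y) + σ • (ee j, (0:ℝ)) : En n × ℝ).1,
          ((x, y) + σ • (ee j, (0:ℝ)) : En n × ℝ).2) := by
        simp [rf_add_ne _ _ _ hj]
      rw [e]
      simpa using hσ
  have hyev : ∀ᶠ σ in 𝓝 (0:ℝ), 0 < y + σ := by
    have : ContinuousAt (fun σ : ℝ => y + σ) 0 := by fun_prop
    exact this.eventually_const_lt (by simpa using hy)
  have hlin' : ∀ σ : ℝ, HasDerivAt (fun σ : ℝ => y + σ - y0) 1 σ := fun σ => by
    simpa using ((hasDerivAt_id σ).const_add y).sub_const y0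
  have Ty := test2 (v := (0, 1)) (v' := (0, 1)) hp hq
    (fun σ => Ps s θ k A B G x0 y0 i ((x, y) + σ • (0, (1:ℝ))))
    (fun σ => bary s θ k X (y + σ) + G * (2 * (y + σ - y0)))
    (baryy s θ k X y + 2 * G)
    (by
      filter_upwards [hyev] with σ hσ
      have h1 := (hasDerivAt_bar_y s θ k X (y + σ) hσ (by positivity)).comp_const_add y σ
      have h2 : HasDerivAt (fun σ : ℝ => (y + σ - y0) ^ 2) (2 * (y + σ - y0)) σ := by
        simpa using (hlin' σ).fun_pow 2
      have h3 := ((h1.add_const (A * X)).sub_const (B * X ^ 2)).add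
        ((h2.const_add (‖x - x0‖ ^ 2)).const_mul G)
      refine h3.congr_of_eventuallyEq (Eventually.of_forall fun τ => ?_)
      simp [Ps, hX])
    (by
      have h1 : HasDerivAt (fun σ => bary s θ k X (y + σ)) (baryy s θ k X y) 0 := by
        have := (hasDerivAt_bar_yy s θ k X (y + 0) (by simpa using hy)
          (by positivity)).comp_const_add y 0
        rwa [add_zero] at this
      refine (h1.add (((hlin' 0).const_mul 2).const_mul G)).congr_deriv (by ring))
    (by
      filter_upwards [(line_tendsto (x, y) (0, 1)).eventually hm] with σ hσ
      have e : ((rf x0 i x, y) + σ • (0, (1:ℝ)) : En n × ℝ) =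
        (rf x0 i ((x, y) + σ • (0, (1:ℝ)) : En n × ℝ).1,
          ((x, y) + σ • (0, (1:ℝ)) : En n × ℝ).2) := by
        simp
      rw [e]
      simpa using hσ)
  have hD : D2 f (rf x0 i x, y) (-ee i, 0) = D2 f (rf x0 i x, y) (ee i, 0) := by
    have := D2_neg (ee i, 0) hq
    simpa using this
  rw [hD] at Ti
  have hsum : ∑ j : Fin n, (D2 f (x, y) (ee j, 0) - D2 f (rf x0 i x, y) (ee j, 0)) ≤
      ∑ j : Fin n, (2 * G + if j = i then barxx s θ k X y - 2 * B else 0) := by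
    refine Finset.sum_le_sum fun j _ => ?_
    by_cases hj : j = i
    · subst hj; rw [if_pos rfl]; linarith [Ti.1]
    · rw [if_neg hj]; linarith [Tj j hj]
  rw [Finset.sum_add_distrib, Finset.sum_ite_eq' Finset.univ i, Finset.sum_sub_distrib] at hsum
  simp only [Finset.mem_univ, if_true, Finset.sum_const, Finset.card_univ, Fintype.card_fin,
    nsmul_eq_mul] at hsum
  have hb := bar_super s θ k X y hs hs' hθ hx.le hy hk
  have h1 : (1-2*s)/y * (2 * (y - y0)) ≤ 2 * (1 - 2*s) := by
    rw [div_mul_eq_mul_div, div_le_iff₀ hy]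
    nlinarith
  have h2 := Ty.2
  simp only [add_zero] at h2
  simp only [lap] at ep eq
  change (∑ j : Fin n, D2 f (x, y) (ee j, 0)) + _ + _ = 0 at ep
  change (∑ j : Fin n, D2 f (rf x0 i x, y) (ee j, 0)) + _ + _ = 0 at eq
  have h3 : (1-2*s)/y * (fderiv ℝ f (x, y) (0,1)) - (1-2*s)/y * (fderiv ℝ f (rf x0 i x, y) (0,1)) =
    (1-2*s)/y * bary s θ k X y + G * ((1-2*s)/y * (2 * (y - y0))) := by
    rw [← mul_sub, h2]; ring
  have h4 := mul_le_mul_of_nonneg_left h1 hG.le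
  have h5 := Ty.1
  subst hB
  nlinarith

end

section
variable {n : ℕ}

structure Sol (a R S : ℝ) (u : ℝ → En n × ℝ → ℝ) : Prop where
  cont : ContinuousOn (fun q : ℝ × (En n × ℝ) => u q.1 q.2)
    (Icc (-S) 0 ×ˢ {p : En n × ℝ | ‖p.1‖ < R ∧ 0 ≤ p.2 ∧ p.2 < S})
  int : ∀ t ∈ Icc (-S) 0, ∀ p : En n × ℝ, ‖p.1‖ < R → 0 < p.2 → p.2 < S →
    ContDiffAt ℝ 2 (u t) p ∧ lap (u t) p + a / p.2 * fderiv ℝ (u t) p (0, 1) = 0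
  bd : ∀ t ∈ Ioc (-S) 0, ∀ x : En n, ‖x‖ < R →
    ∃ L, HasDerivWithinAt (fun τ => u τ (x, 0)) L (Icc (-S) 0) t ∧ NormalDerivLimit a (u t) x L

def th (s κ ti t : ℝ) : ℝ := (κ * (t - ti)) ^ (1/s)
def kk (s κ ti t : ℝ) : ℝ := 1/5 * (κ * (t - ti)) ^ (1/s-1)

lemma th_nonneg {s κ ti t : ℝ} (hκ : 0 < κ) (ht : ti ≤ t) : 0 ≤ th s κ ti t :=
  Real.rpow_nonneg (mul_nonneg hκ.le (by linarith)) _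

lemma kk_nonneg {s κ ti t : ℝ} (hκ : 0 < κ) (ht : ti ≤ t) : 0 ≤ kk s κ ti t :=
  mul_nonneg (by norm_num) (Real.rpow_nonneg (mul_nonneg hκ.le (by linarith)) _)

lemma kk_le {s κ ti t : ℝ} (hs : 0 < s) (hs' : s < 1/2) (hκ : 0 < κ) (ht : ti ≤ t) (x y : ℝ)
    (hy : 0 ≤ y) : kk s κ ti t * y ^ (2*s) ≤ (x^2+y^2+th s κ ti t)/5 := by
  have h := bar_k_le s (th s κ ti t) x y hs hs' (th_nonneg hκ ht) hy
  have e : th s κ ti t ^ (1-s) = (κ * (t - ti)) ^ (1/s-1) := by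
    rw [th, ← Real.rpow_mul (mul_nonneg hκ.le (by linarith))]
    congr 1
    field_simp
  rw [e] at h
  rw [kk]; linarith

lemma bar_lsc (s κ ti : ℝ) (hs : 0 < s) (hs' : s < 1/2) (hκ : 0 < κ) (x0 : En n) (i : Fin n)
    (K : Set (ℝ × (En n × ℝ))) (hK : ∀ q ∈ K, ti ≤ q.1 ∧ x0 i ≤ q.2.1 i ∧ 0 ≤ q.2.2) :
    UpperSemicontinuousOn (fun q : ℝ × (En n × ℝ) =>
      - bar s (th s κ ti q.1) (kk s κ ti q.1) (q.2.1 i - x0 i) q.2.2) K := by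
  intro q hq
  obtain ⟨h1, h2, h3⟩ := hK q hq
  have hth := th_nonneg (s := s) hκ h1
  by_cases hN : (q.2.1 i - x0 i)^2 + q.2.2^2 + th s κ ti q.1 = 0
  · intro c hc
    have hX : q.2.1 i - x0 i = 0 := by
      have : (q.2.1 i - x0 i)^2 = 0 := by nlinarith [sq_nonneg (q.2.1 i - x0 i), sq_nonneg q.2.2]
      exact pow_eq_zero_iff (two_ne_zero) |>.1 this
    have hb : bar s (th s κ ti q.1) (kk s κ ti q.1) (q.2.1 i - x0 i) q.2.2 = 0 := by
      rw [hX]; simp [bar]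
    simp only [hb] at hc
    filter_upwards [self_mem_nhdsWithin] with q' hq'
    obtain ⟨h1, h2, h3⟩ := hK q' hq'
    have := bar_nonneg s (th s κ ti q'.1) (kk s κ ti q'.1) (q'.2.1 i - x0 i) q'.2.2
      (th_nonneg hκ h1) (by linarith) (kk_le hs hs' hκ h1 _ _ h3)
    linarith
  · refine ContinuousWithinAt.upperSemicontinuousWithinAt (ContinuousAt.continuousWithinAt ?_)
    have ct : Continuous (fun q : ℝ × (En n × ℝ) => th s κ ti q.1) := by
      unfold th
      exact Continuous.rpow_const (by fun_prop) (fun _ => Or.inr (by positivity))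
    have ck : Continuous (fun q : ℝ × (En n × ℝ) => kk s κ ti q.1) := by
      unfold kk
      refine Continuous.mul continuous_const
        (Continuous.rpow_const (by fun_prop) (fun _ => Or.inr ?_))
      rw [sub_nonneg, le_div_iff₀ hs]; linarith
    have cy : Continuous (fun q : ℝ × (En n × ℝ) => q.2.2 ^ (2*s)) :=
      Continuous.rpow_const (by fun_prop) (fun _ => Or.inr (by positivity))
    have cX : Continuous (fun q : ℝ × (En n × ℝ) => q.2.1 i - x0 i) := by fun_prop
    have cN : ∀ p : ℝ, ContinuousAt (fun q : ℝ × (En n × ℝ) =>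
        ((q.2.1 i - x0 i)^2 + q.2.2^2 + th s κ ti q.1) ^ p) q := fun p => by
      refine ContinuousAt.rpow_const ?_ (Or.inl hN)
      exact (((cX.pow 2).add (by fun_prop)).add ct).continuousAt
    unfold bar
    exact ((cX.continuousAt.mul (cN _)).sub ((ck.mul cy).continuousAt.mul
      (cX.continuousAt.mul (cN _)))).neg

def Zf (s κ A B G ε ti : ℝ) (x0 : En n) (y0 : ℝ) (i : Fin n) (u : ℝ → En n × ℝ → ℝ)
    (t : ℝ) (p : En n × ℝ) : ℝ :=
  u t p - u t (rf x0 i p.1, p.2) -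
    (Ps s (th s κ ti t) (kk s κ ti t) A B G x0 y0 i p + ε * (t - ti))

lemma bdry_contra (s A B G ε ti t : ℝ) (x0 : En n) (y0 : ℝ) (i : Fin n)
    (u : ℝ → En n × ℝ → ℝ) (x : En n) (hs : 0 < s) (hs' : s < 1/2) (ht : ti < t) (hε : 0 < ε)
    (hX : 0 < x i - x0 i) (L1 L2 : ℝ)
    (hd1 : HasDerivWithinAt (fun τ => u τ (x, 0)) L1 (Icc ti t) t)
    (hd2 : HasDerivWithinAt (fun τ => u τ (rf x0 i x, 0)) L2 (Icc ti t) t)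
    (hn1 : NormalDerivLimit (1-2*s) (u t) x L1)
    (hn2 : NormalDerivLimit (1-2*s) (u t) (rf x0 i x) L2)
    (hf1 : ∀ᶠ y in 𝓝[>] (0:ℝ), DifferentiableAt ℝ (u t) (x, y))
    (hf2 : ∀ᶠ y in 𝓝[>] (0:ℝ), DifferentiableAt ℝ (u t) (rf x0 i x, y))
    (hc1 : ContinuousWithinAt (fun y => u t (x, y)) (Ici 0) 0)
    (hc2 : ContinuousWithinAt (fun y => u t (rf x0 i x, y)) (Ici 0) 0)
    (hmt : ∀ τ ∈ Icc ti t, Zf s (4*s^2/5) A B G ε ti x0 y0 i u τ (x, 0) ≤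
      Zf s (4*s^2/5) A B G ε ti x0 y0 i u t (x, 0))
    (hmy : ∀ᶠ y in 𝓝[>] (0:ℝ), Zf s (4*s^2/5) A B G ε ti x0 y0 i u t (x, y) ≤
      Zf s (4*s^2/5) A B G ε ti x0 y0 i u t (x, 0)) : False := by
  set κ := 4*s^2/5 with hκd
  have hκ : 0 < κ := by positivity
  set X := x i - x0 i with hXd
  have hθ := th_nonneg (s := s) hκ ht.le
  -- time direction
  have T := left_max (fun τ => Zf s κ A B G ε ti x0 y0 i u τ (x, 0)) _ ti t ht (by
    have hb := (bar_time s κ ti X t hs hκ ht (kk s κ ti) hX).hasDerivWithinAt (s := Icc ti t)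
    have he : HasDerivWithinAt (fun τ => ε * (τ - ti)) ε (Icc ti t) t := by
      simpa using (((hasDerivAt_id t).sub_const ti).const_mul ε).hasDerivWithinAt
    exact (hd1.sub hd2).sub ((((hb.add_const (A * X)).sub_const (B * X^2)).add_const
      (G * (‖x - x0‖^2 + (0 - y0)^2))).add he)) hmt
  -- normal direction
  have e1 : ∀ y : ℝ, ∀ z : En n, DifferentiableAt ℝ (u t) (z, y) →
      HasDerivAt (fun y => u t (z, y)) (fderiv ℝ (u t) (z, y) (0, 1)) y := fun y z h =>
    h.hasFDerivAt.comp_hasDerivAt y ((hasDerivAt_const y z).prodMk (hasDerivAt_id y))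
  have N := normal_max (fun y => Zf s κ A B G ε ti x0 y0 i u t (x, y))
    (fun y => fderiv ℝ (u t) (x, y) (0,1) - fderiv ℝ (u t) (rf x0 i x, y) (0,1) -
      (bary s (th s κ ti t) (kk s κ ti t) X y + G * (2 * (y - y0))))
    (L1 - L2 - (-(2*s*kk s κ ti t*(X * (X^2+th s κ ti t) ^ (-3/2:ℝ))) + 0)) (1-2*s)
    (by
      have cN : ∀ p : ℝ, ContinuousAt (fun y : ℝ => (X^2 + y^2 + th s κ ti t) ^ p) 0 := fun p =>
        ContinuousAt.rpow_const (by fun_prop) (Or.inl (by positivity))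
      have cy : Continuous (fun y : ℝ => y ^ (2*s)) :=
        Continuous.rpow_const continuous_id (fun _ => Or.inr (by positivity))
      have cb : ContinuousAt (fun y : ℝ => bar s (th s κ ti t) (kk s κ ti t) X y) 0 := by
        unfold bar
        exact (continuousAt_const.mul (cN _)).sub ((continuousAt_const.mul cy.continuousAt).mul
          (continuousAt_const.mul (cN _)))
      refine (hc1.sub hc2).sub (ContinuousAt.continuousWithinAt ?_)
      refine ContinuousAt.add (ContinuousAt.add (ContinuousAt.sub (ContinuousAt.add cb ?_) ?_) ?_) ?_
      all_goals fun_prop)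
    (by
      filter_upwards [hf1, hf2, self_mem_nhdsWithin] with y h1 h2 hy
      have hy : 0 < y := hy
      have hb := hasDerivAt_bar_y s (th s κ ti t) (kk s κ ti t) X y hy (by positivity)
      have hg : HasDerivAt (fun y : ℝ => G * (‖x - x0‖^2 + (y - y0)^2)) (G * (2 * (y - y0))) y := by
        simpa using (((((hasDerivAt_id y).sub_const y0).fun_pow 2).const_add (‖x - x0‖^2)).const_mul G)
      exact ((e1 y x h1).sub (e1 y _ h2)).sub ((((hb.add_const (A * X)).sub_const (B * X^2)).add
        hg).add_const (ε * (t - ti))))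
    (by
      have h0 : Tendsto (fun y : ℝ => y ^ (1-2*s) * (G * (2 * (y - y0)))) (𝓝[>] 0) (𝓝 0) := by
        have : ContinuousAt (fun y : ℝ => y ^ (1-2*s) * (G * (2 * (y - y0)))) 0 :=
          ContinuousAt.mul (ContinuousAt.rpow_const continuousAt_id (Or.inr (by linarith)))
            (by fun_prop)
        have h := this.tendsto.mono_left (nhdsWithin_le_nhds (s := Ioi 0))
        rwa [Real.zero_rpow (by linarith), zero_mul] at h
      have hb := bary_limit s (th s κ ti t) (kk s κ ti t) X hs hs' hθ hX
      refine ((hn1.sub hn2).sub (hb.add h0)).congr fun y => by ring)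
    hmy
  have hP : κ/(2*s) = 2*s/5 := by rw [hκd]; field_simp; norm_num
  rw [hP] at T
  simp only [kk, th] at N
  nlinarith

end

section
variable {n : ℕ}

lemma continuous_rf (x0 : En n) (i : Fin n) : Continuous (rf x0 i) := by
  unfold rf; fun_prop

lemma rf_fix (x0 : En n) (i : Fin n) (x : En n) (h : x i - x0 i = 0) : rf x0 i x = x := by
  have : x0 i - x i = 0 := by linarith
  simp [rf, this]

lemma abs_coord_le (x : En n) (i : Fin n) : |x i| ≤ ‖x‖ := by
  simpa using PiLp.norm_apply_le x i

set_option maxHeartbeats 1000000 in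
lemma lip_core0 (s R S δ ρ A B G ε t0 y0 : ℝ) (u : ℝ → En n × ℝ → ℝ) (hs : 0 < s) (hs' : s < 1/2)
    (hu : Sol (1-2*s) R S u)
    (hb : ∀ t ∈ Icc (-S) 0, ∀ p : En n × ℝ, ‖p.1‖ < R → 0 ≤ p.2 → p.2 < S → |u t p| ≤ 1/2)
    (hδ : 0 < δ) (ht0 : t0 ∈ Icc (-(S-δ)) 0) (x0 : En n) (hx0 : ‖x0‖ < R - δ) (hy0 : 0 ≤ y0)
    (hy0' : y0 < S - δ) (i : Fin n) (hρ : ρ = δ/2) (hG : G = 1/ρ^2) (hB : B = G * (n+3))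
    (hA : A = B * ρ) (hε : 0 < ε) (x : En n) (hx : ‖x - x0‖ ≤ ρ) (hxi : x0 i ≤ x i) :
    Zf s (4*s^2/5) A B G ε (t0-δ) x0 y0 i u t0 (x, y0) ≤ 0 := by
  set κ := 4*s^2/5 with hκd
  have hκ : 0 < κ := by positivity
  set ti := t0 - δ with hti
  have hρ0 : 0 < ρ := by linarith
  have hG0 : 0 < G := by rw [hG]; positivity
  have hB0 : 0 < B := by rw [hB]; positivity
  have hGρ : G * ρ^2 = 1 := by rw [hG]; field_simp
  set K : Set (ℝ × (En n × ℝ)) := Icc ti t0 ×ˢ ((Metric.closedBall x0 ρ ∩ {x | x0 i ≤ x i}) ×ˢ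
    Icc (max 0 (y0-ρ)) (y0+ρ)) with hK
  have memK : ∀ t x y, (t, (x, y)) ∈ K ↔ (ti ≤ t ∧ t ≤ t0) ∧ (‖x - x0‖ ≤ ρ ∧ x0 i ≤ x i) ∧
      ((0 ≤ y ∧ y0 - ρ ≤ y) ∧ y ≤ y0 + ρ) := by
    intro t x y
    simp only [hK, Set.mem_prod, Set.mem_Icc, Set.mem_inter_iff, Metric.mem_closedBall,
      dist_eq_norm, Set.mem_ofPred_eq, max_le_iff]
  have hKc : IsCompact K := by
    refine isCompact_Icc.prod (IsCompact.prod ?_ isCompact_Icc)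
    refine (isCompact_closedBall x0 ρ).inter_right (isClosed_le continuous_const (by fun_prop))
  have norm_in : ∀ z : En n, ‖z - x0‖ ≤ ρ → ‖z‖ < R := fun z hz => by
    have := norm_add_le (z - x0) x0
    rw [sub_add_cancel] at this; linarith
  have tin : ∀ t, ti ≤ t → t ≤ t0 → t ∈ Icc (-S) 0 := fun t h1 h2 =>
    ⟨by linarith [ht0.1], by linarith [ht0.2]⟩
  have husc : UpperSemicontinuousOn (fun q : ℝ × (En n × ℝ) =>
      Zf s κ A B G ε ti x0 y0 i u q.1 q.2) K := by
    have h1 := bar_lsc s κ ti hs hs' hκ x0 i K (by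
      rintro ⟨t, x, y⟩ hq
      have := (memK t x y).1 hq
      exact ⟨this.1.1, this.2.1.2, this.2.2.1.1⟩)
    have h2 : ContinuousOn (fun q : ℝ × (En n × ℝ) => u q.1 q.2) K := by
      refine hu.cont.mono ?_
      rintro ⟨t, x, y⟩ hq
      have := (memK t x y).1 hq
      exact ⟨tin t this.1.1 this.1.2, norm_in x this.2.1.1, this.2.2.1.1, by
        show y < S
        linarith [this.2.2.2]⟩
    have h3 : ContinuousOn (fun q : ℝ × (En n × ℝ) => u q.1 (rf x0 i q.2.1, q.2.2)) K := by
      have hc : Continuous (fun q : ℝ × (En n × ℝ) => (q.1, (rf x0 i q.2.1, q.2.2))) := by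
        have := continuous_rf x0 i
        fun_prop
      refine hu.cont.comp hc.continuousOn ?_
      rintro ⟨t, x, y⟩ hq
      have := (memK t x y).1 hq
      exact ⟨tin t this.1.1 this.1.2, norm_in _ (by simpa [norm_rf] using this.2.1.1),
        this.2.2.1.1, by
          show y < S
          linarith [this.2.2.2]⟩
    have h4 : ContinuousOn (fun q : ℝ × (En n × ℝ) => A * (q.2.1 i - x0 i) - B * (q.2.1 i - x0 i)^2
        + G * (‖q.2.1 - x0‖^2 + (q.2.2 - y0)^2) + ε * (q.1 - ti)) K :=
      Continuous.continuousOn (by fun_prop)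
    have := ((h2.sub h3).sub h4).upperSemicontinuousOn.add h1
    have e : (fun q : ℝ × (En n × ℝ) => Zf s κ A B G ε ti x0 y0 i u q.1 q.2) =
        fun q => (u q.1 q.2 - u q.1 (rf x0 i q.2.1, q.2.2) - (A * (q.2.1 i - x0 i) -
        B * (q.2.1 i - x0 i)^2 + G * (‖q.2.1 - x0‖^2 + (q.2.2 - y0)^2) + ε * (q.1 - ti))) +
        -bar s (th s κ ti q.1) (kk s κ ti q.1) (q.2.1 i - x0 i) q.2.2 := by
      funext q
      simp only [Zf, Ps]
      ring
    rw [e]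
    exact this
  have hmem0 : (t0, (x, y0)) ∈ K := (memK _ _ _).2
    ⟨⟨by linarith, le_rfl⟩, ⟨hx, hxi⟩, ⟨hy0, by linarith⟩, by linarith⟩
  obtain ⟨⟨t, z, y⟩, hq, hmax⟩ := husc.exists_isMaxOn ⟨_, hmem0⟩ hKc
  have hmax' : ∀ t' z' y', (t', (z', y')) ∈ K → Zf s κ A B G ε ti x0 y0 i u t' (z', y') ≤
      Zf s κ A B G ε ti x0 y0 i u t (z, y) := fun t' z' y' h => hmax h
  refine (hmax' _ _ _ hmem0).trans ?_
  by_contra hpos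
  push Not at hpos
  obtain ⟨⟨ht1, ht2⟩, ⟨hz1, hz2⟩, ⟨hy1, hy2⟩, hy3⟩ := (memK _ _ _).1 hq
  have hth := th_nonneg (s := s) hκ ht1
  have hkk := kk_le hs hs' hκ ht1 (z i - x0 i) y hy1
  have hbar := bar_nonneg s _ _ (z i - x0 i) y hth (by linarith) hkk
  have hXρ : z i - x0 i ≤ ρ := by
    have := abs_coord_le (z - x0) i
    simp only [PiLp.sub_apply] at this
    linarith [le_abs_self (z i - x0 i)]
  have hAB : 0 ≤ A * (z i - x0 i) - B * (z i - x0 i)^2 := by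
    have : A * (z i - x0 i) - B * (z i - x0 i)^2 = B * ((z i - x0 i) * (ρ - (z i - x0 i))) := by
      rw [hA]; ring
    rw [this]
    exact mul_nonneg hB0.le (mul_nonneg (by linarith) (by linarith))
  have htt : 0 ≤ ε * (t - ti) := mul_nonneg hε.le (by linarith)
  have hyS : y < S := by linarith
  have hrfz : ‖rf x0 i z - x0‖ ≤ ρ := by rwa [norm_rf]
  have hw : u t (z, y) - u t (rf x0 i z, y) ≤ 1 := by
    have h1 := abs_le.1 (hb t (tin t ht1 ht2) (z, y) (norm_in z hz1) hy1 hyS)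
    have h2 := abs_le.1 (hb t (tin t ht1 ht2) (rf x0 i z, y) (norm_in _ hrfz) hy1 hyS)
    linarith [h1.2, h2.1]
  simp only [Zf, Ps, mul_add G] at hpos
  have hq1 : 0 ≤ G * ‖z - x0‖^2 := by positivity
  have hq2 : 0 ≤ G * (y - y0)^2 := by positivity
  -- strictness
  have hz1' : ‖z - x0‖ < ρ := by
    rcases hz1.lt_or_eq with h | h
    · exact h
    · rw [h, hGρ] at hpos; linarith
  have hyy : ∀ r, (y - y0)^2 = r^2 → r = ρ → False := by
    intro r h1 h2
    rw [h1, h2, hGρ] at hpos; linarith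
  have hy2' : y0 - ρ < y := by
    rcases hy2.lt_or_eq with h | h
    · exact h
    · exact (hyy ρ (by rw [← h]; ring) rfl).elim
  have hy3' : y < y0 + ρ := by
    rcases hy3.lt_or_eq with h | h
    · exact h
    · exact (hyy ρ (by rw [h]; ring) rfl).elim
  have hX : 0 < z i - x0 i := by
    rcases (sub_nonneg.2 hz2).lt_or_eq with h | h
    · exact h
    · rw [rf_fix x0 i z h.symm] at hpos
      linarith
  have hzR := norm_in z hz1
  have hrR := norm_in _ hrfz
  rcases hy1.lt_or_eq with hy | hy
  · have i1 := hu.int t (tin t ht1 ht2) (z, y) hzR hy hyS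
    have i2 := hu.int t (tin t ht1 ht2) (rf x0 i z, y) hrR hy hyS
    refine interior_contra s (th s κ ti t) (kk s κ ti t) A B G x0 y0 i (u t) z y hs hs' hth hX hy
      hkk hG0 hB hy0 i1.1 i2.1 i1.2 i2.2 ?_
    have c1 : ∀ᶠ p : En n × ℝ in 𝓝 (z, y), ‖p.1 - x0‖ < ρ :=
      ContinuousAt.eventually_lt (by fun_prop) (by fun_prop) hz1'
    have c2 : ∀ᶠ p : En n × ℝ in 𝓝 (z, y), x0 i < p.1 i :=
      ContinuousAt.eventually_lt (by fun_prop) (by fun_prop) (by simpa using hX)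
    have c3 : ∀ᶠ p : En n × ℝ in 𝓝 (z, y), 0 < p.2 :=
      ContinuousAt.eventually_lt (by fun_prop) (by fun_prop) hy
    have c4 : ∀ᶠ p : En n × ℝ in 𝓝 (z, y), y0 - ρ < p.2 :=
      ContinuousAt.eventually_lt (by fun_prop) (by fun_prop) hy2'
    have c5 : ∀ᶠ p : En n × ℝ in 𝓝 (z, y), p.2 < y0 + ρ :=
      ContinuousAt.eventually_lt (by fun_prop) (by fun_prop) hy3'
    filter_upwards [c1, c2, c3, c4, c5] with p h1 h2 h3 h4 h5
    have := hmax' t p.1 p.2 ((memK _ _ _).2 ⟨⟨ht1, ht2⟩, ⟨h1.le, h2.le⟩, ⟨h3.le, h4.le⟩, h5.le⟩)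
    simp only [Zf] at this
    linarith
  · subst hy
    rcases ht1.lt_or_eq with ht | ht
    · have hsub : Icc ti t ⊆ Icc (-S) 0 := fun τ hτ => tin τ hτ.1 (hτ.2.trans ht2)
      have tI : t ∈ Ioc (-S) 0 := ⟨by linarith [ht0.1], by linarith [ht0.2]⟩
      obtain ⟨L1, d1, n1⟩ := hu.bd t tI z hzR
      obtain ⟨L2, d2, n2⟩ := hu.bd t tI _ hrR
      have cS : ∀ᶠ y in 𝓝[>] (0:ℝ), y < S := nhdsWithin_le_nhds (eventually_lt_nhds hyS)
      have df : ∀ z' : En n, ‖z'‖ < R → ∀ᶠ y in 𝓝[>] (0:ℝ), DifferentiableAt ℝ (u t) (z', y) := by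
        intro z' hz'
        filter_upwards [cS, self_mem_nhdsWithin] with y h1 h2
        exact (hu.int t (tin t ht1 ht2) (z', y) hz' h2 h1).1.differentiableAt (by simp)
      have ct : ∀ z' : En n, ‖z'‖ < R → ContinuousWithinAt (fun y => u t (z', y)) (Ici 0) 0 := by
        intro z' hz'
        have h1 := hu.cont (t, (z', 0)) ⟨tin t ht1 ht2, hz', le_rfl, hyS⟩
        have h2 : ContinuousWithinAt (fun y : ℝ => (t, (z', y))) (Ico 0 S) 0 :=
          Continuous.continuousWithinAt (by fun_prop)
        have h3 := ContinuousWithinAt.comp (t := (Icc (-S) 0 ×ˢ {p : En n × ℝ | ‖p.1‖ < R ∧ 0 ≤ p.2 ∧ p.2 < S})) (f := fun y : ℝ => (t, (z', y))) (x := (0:ℝ)) h1 h2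
          (fun y hy => ⟨tin t ht1 ht2, hz', hy.1, hy.2⟩)
        exact h3.mono_of_mem_nhdsWithin (Ico_mem_nhdsGE hyS)
      refine bdry_contra s A B G ε ti t x0 y0 i u z hs hs' ht hε hX L1 L2 (d1.mono hsub)
        (d2.mono hsub) n1 n2 (df _ hzR) (df _ hrR) (ct _ hzR) (ct _ hrR) ?_ ?_
      · intro τ hτ
        exact hmax' _ _ _ ((memK _ _ _).2 ⟨⟨hτ.1, hτ.2.trans ht2⟩, ⟨hz1, hz2⟩, ⟨le_rfl, hy2⟩, hy3⟩)
      · have c5 : ∀ᶠ y in 𝓝[>] (0:ℝ), y < y0 + ρ := nhdsWithin_le_nhds (eventually_lt_nhds hy3')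
        filter_upwards [c5, self_mem_nhdsWithin] with y h1 h2
        have h2 : 0 < y := h2
        exact hmax' _ _ _ ((memK _ _ _).2 ⟨⟨ht1, ht2⟩, ⟨hz1, hz2⟩, ⟨h2.le, by linarith⟩, h1.le⟩)
    · have : th s κ ti t = 0 := by
        rw [th, ← ht, sub_self, mul_zero, Real.zero_rpow (by positivity)]
      rw [this, bar_init s _ _ hs hX] at hpos
      linarith

end

section
variable {n : ℕ}

lemma D2_const_mul (c : ℝ) {f : En n × ℝ → ℝ} {p : En n × ℝ} (v : En n × ℝ) 
    (hf : ContDiffAt ℝ 2 f p) : D2 (fun q => c * f q) p v = c * D2 f p v := by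
  have e : (fun q => fderiv ℝ (fun q => c * f q) q v) =ᶠ[𝓝 p] fun q => c * fderiv ℝ f q v := by
    filter_upwards [hf.eventually (by simp)] with q hq
    rw [fderiv_const_mul (hq.differentiableAt (by simp))]; simp
  rw [D2, e.fderiv_eq, fderiv_const_mul (fderiv_diff v hf)]
  simp [D2]

lemma D2_sub {f g : En n × ℝ → ℝ} {p : En n × ℝ} (v : En n × ℝ)
    (hf : ContDiffAt ℝ 2 f p) (hg : ContDiffAt ℝ 2 g p) :
    D2 (fun q => f q - g q) p v = D2 f p v - D2 g p v := by
  have e : (fun q => fderiv ℝ (fun q => f q - g q) q v) =ᶠ[𝓝 p]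
      fun q => fderiv ℝ f q v - fderiv ℝ g q v := by
    filter_upwards [hf.eventually (by simp), hg.eventually (by simp)] with q hq hq'
    rw [fderiv_fun_sub (hq.differentiableAt (by simp)) (hq'.differentiableAt (by simp))]; simp
  rw [D2, e.fderiv_eq, fderiv_fun_sub (fderiv_diff v hf) (fderiv_diff v hg)]
  simp [D2]

lemma D2_trans (w : En n × ℝ) (f : En n × ℝ → ℝ) (p v : En n × ℝ) :
    D2 (fun q => f (q + w)) p v = D2 f (p + w) v := by
  have e : (fun q => fderiv ℝ (fun q => f (q + w)) q v) = fun q => fderiv ℝ f (q + w) v := by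
    funext q
    rw [fderiv_comp_add_right]
  rw [D2, e, fderiv_comp_add_right (f := fun q => fderiv ℝ f q v)]
  rfl

lemma lap_const_mul (c : ℝ) {f : En n × ℝ → ℝ} {p : En n × ℝ}
    (hf : ContDiffAt ℝ 2 f p) : lap (fun q => c * f q) p = c * lap f p := by
  simp only [lap, D2_const_mul c _ hf, mul_add, Finset.mul_sum]

lemma lap_sub {f g : En n × ℝ → ℝ} {p : En n × ℝ}
    (hf : ContDiffAt ℝ 2 f p) (hg : ContDiffAt ℝ 2 g p) :
    lap (fun q => f q - g q) p = lap f p - lap g p := by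
  simp only [lap, D2_sub _ hf hg, Finset.sum_sub_distrib]
  ring

lemma lap_trans (w : En n × ℝ) (f : En n × ℝ → ℝ) (p : En n × ℝ) :
    lap (fun q => f (q + w)) p = lap f (p + w) := by
  simp only [lap, D2_trans]

namespace Sol
variable {a R S : ℝ} {u v : ℝ → En n × ℝ → ℝ}

lemma mono (hu : Sol a R S u) {R' S' : ℝ} (hR : R' ≤ R) (hS : S' ≤ S) : Sol a R' S' u where
  cont := hu.cont.mono (by
    rintro ⟨t, p⟩ ⟨⟨h1, h2⟩, h3, h4, h5⟩
    exact ⟨⟨by linarith, h2⟩, h3.trans_le hR, h4, h5.trans_le hS⟩)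
  int t ht p h1 h2 h3 := hu.int t ⟨by linarith [ht.1], ht.2⟩ p (h1.trans_le hR) h2 (h3.trans_le hS)
  bd t ht x hx := by
    obtain ⟨L, h1, h2⟩ := hu.bd t ⟨by linarith [ht.1], ht.2⟩ x (hx.trans_le hR)
    exact ⟨L, h1.mono (Icc_subset_Icc (by linarith) le_rfl), h2⟩

lemma const_mul (c : ℝ) (hu : Sol a R S u) : Sol a R S (fun t p => c * u t p) where
  cont := continuousOn_const.mul hu.cont
  int t ht p h1 h2 h3 := by
    obtain ⟨h4, h5⟩ := hu.int t ht p h1 h2 h3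
    refine ⟨contDiffAt_const.mul h4, ?_⟩
    rw [lap_const_mul c h4, fderiv_const_mul (h4.differentiableAt (by simp))]
    simp only [smul_apply, smul_eq_mul]
    linear_combination c * h5
  bd t ht x hx := by
    obtain ⟨L, h1, h2⟩ := hu.bd t ht x hx
    refine ⟨c * L, h1.const_mul c, ?_⟩
    refine (Tendsto.const_mul c h2).congr' ?_
    have hS : 0 < S := by linarith [ht.1, ht.2]
    have cS : ∀ᶠ y in 𝓝[>] (0:ℝ), y < S := nhdsWithin_le_nhds (eventually_lt_nhds hS)
    filter_upwards [cS, self_mem_nhdsWithin] with y h1 h2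
    rw [fderiv_const_mul ((hu.int t ⟨ht.1.le, ht.2⟩ (x, y) hx h2 h1).1.differentiableAt (by simp))]
    simp only [smul_apply, smul_eq_mul]
    ring

lemma sub (hu : Sol a R S u) (hv : Sol a R S v) : Sol a R S (fun t p => u t p - v t p) where
  cont := hu.cont.sub hv.cont
  int t ht p h1 h2 h3 := by
    obtain ⟨h4, h5⟩ := hu.int t ht p h1 h2 h3
    obtain ⟨h6, h7⟩ := hv.int t ht p h1 h2 h3
    refine ⟨h4.sub h6, ?_⟩
    rw [lap_sub h4 h6, fderiv_fun_sub (h4.differentiableAt (by simp)) (h6.differentiableAt (by simp))]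
    simp only [sub_apply]
    linear_combination h5 - h7
  bd t ht x hx := by
    obtain ⟨L, h1, h2⟩ := hu.bd t ht x hx
    obtain ⟨L', h1', h2'⟩ := hv.bd t ht x hx
    refine ⟨L - L', h1.sub h1', ?_⟩
    refine (Tendsto.sub h2 h2').congr' ?_
    have hS : 0 < S := by linarith [ht.1, ht.2]
    have cS : ∀ᶠ y in 𝓝[>] (0:ℝ), y < S := nhdsWithin_le_nhds (eventually_lt_nhds hS)
    filter_upwards [cS, self_mem_nhdsWithin] with y h1 h2
    rw [fderiv_fun_sub ((hu.int t ⟨ht.1.le, ht.2⟩ (x, y) hx h2 h1).1.differentiableAt (by simp))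
      ((hv.int t ⟨ht.1.le, ht.2⟩ (x, y) hx h2 h1).1.differentiableAt (by simp))]
    simp only [sub_apply]
    ring

lemma trans (hu : Sol a R S u) (w : En n) :
    Sol a (R - ‖w‖) S (fun t p => u t (p + (w, 0))) := by
  have hw : ∀ z : En n, ‖z‖ < R - ‖w‖ → ‖z + w‖ < R := fun z hz => by
    linarith [norm_add_le z w]
  have e2 : ∀ p : En n × ℝ, (p + (w, (0:ℝ))).2 = p.2 := fun p => by
    rw [Prod.snd_add, add_zero]
  have e1 : ∀ p : En n × ℝ, ‖p.1‖ < R - ‖w‖ → ‖(p + (w, (0:ℝ))).1‖ < R := fun p hp => by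
    rw [Prod.fst_add]; exact hw p.1 hp
  refine ⟨?_, ?_, ?_⟩
  · have hc : Continuous (fun q : ℝ × (En n × ℝ) => (q.1, q.2 + (w, (0:ℝ)))) := by fun_prop
    refine hu.cont.comp hc.continuousOn ?_
    rintro ⟨t, p⟩ ⟨h1, h2, h3, h4⟩
    refine Set.mk_mem_prod h1 ?_
    have h3' : 0 ≤ (p + (w, (0:ℝ))).2 := by rw [e2]; exact h3
    have h4' : (p + (w, (0:ℝ))).2 < S := by rw [e2]; exact h4
    exact ⟨e1 p h2, h3', h4'⟩
  · intro t ht p h1 h2 h3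
    obtain ⟨h4, h5⟩ := hu.int t ht (p + (w, (0:ℝ))) (e1 p h1)
      (h2.trans_eq (e2 p).symm) ((e2 p).trans_lt h3)
    refine ⟨h4.comp p (by fun_prop), ?_⟩
    rw [lap_trans, fderiv_comp_add_right]
    rwa [e2] at h5
  · intro t ht x hx
    obtain ⟨L, h1, h2⟩ := hu.bd t ht _ (hw x hx)
    refine ⟨L, by simpa using h1, ?_⟩
    refine h2.congr fun y => ?_
    rw [fderiv_comp_add_right]
    simp

lemma diffq (hu : Sol a R S u) (i : Fin n) (h : ℝ) :
    Sol a (R - |h|) S (fun t p => dq i h (fun x => u t (x, p.2)) p.1) := by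
  have h1 := hu.trans (h • ee i)
  rw [norm_smul_ee] at h1
  have h2 := (h1.sub (hu.mono (sub_le_self R (abs_nonneg h)) le_rfl)).const_mul h⁻¹
  convert h2 using 1
  funext t p
  simp only [dq, Prod.add_def, add_zero, div_eq_inv_mul]
end Sol

end

section
variable {n : ℕ}

def Bd (R S M : ℝ) (u : ℝ → En n × ℝ → ℝ) : Prop :=
  ∀ t ∈ Icc (-S) 0, ∀ p : En n × ℝ, ‖p.1‖ < R → 0 ≤ p.2 → p.2 < S → |u t p| ≤ M

lemma Bd.mono {R S M R' S' : ℝ} {u : ℝ → En n × ℝ → ℝ} (h : Bd R S M u) (hR : R' ≤ R)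
    (hS : S' ≤ S) : Bd R' S' M u := fun t ht p h1 h2 h3 =>
  h t ⟨by linarith [ht.1], ht.2⟩ p (h1.trans_le hR) h2 (h3.trans_le hS)

def lipC (n : ℕ) (s δ : ℝ) : ℝ :=
  ((4*s^2/5) * δ) ^ (1/s) |>.rpow (-1/2) |> (· + (1/(δ/2)^2 * (n+3)) * (δ/2))

lemma lipC_pos (n : ℕ) (s δ : ℝ) (hδ : 0 < δ) : 0 < lipC n s δ := by
  unfold lipC
  have h1 : 0 ≤ (((4*s^2/5) * δ) ^ (1/s)).rpow (-1/2) :=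
    Real.rpow_nonneg (Real.rpow_nonneg (by positivity) _) _
  have h2 : 0 < (1/(δ/2)^2 * ((n:ℝ)+3)) * (δ/2) := by positivity
  dsimp only
  linarith

lemma lip_core (s R S δ t0 y0 : ℝ) (u : ℝ → En n × ℝ → ℝ) (hs : 0 < s) (hs' : s < 1/2)
    (hu : Sol (1-2*s) R S u) (hb : Bd R S (1/2) u)
    (hδ : 0 < δ) (ht0 : t0 ∈ Icc (-(S-δ)) 0) (x0 : En n) (hx0 : ‖x0‖ < R - δ) (hy0 : 0 ≤ y0)
    (hy0' : y0 < S - δ) (i : Fin n) (d : ℝ) (hd : 0 < d) (hd' : d ≤ δ/2) :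
    u t0 (x0 + d • ee i, y0) - u t0 (x0 - d • ee i, y0) ≤ lipC n s δ * d := by
  have hn3 : (0:ℝ) ≤ n + 2 := by positivity
  set G := 1/(δ/2)^2 with hG
  have hG0 : 0 < G := by positivity
  have hx : (x0 + d • ee i) i - x0 i = d := by simp [ee_apply]
  have hnx : ‖x0 + d • ee i - x0‖ = d := by
    rw [add_sub_cancel_left, norm_smul_ee, abs_of_pos hd]
  have hrf : rf x0 i (x0 + d • ee i) = x0 - d • ee i := by
    rw [rf_add_same, rf_fix x0 i x0 (sub_self _)]; simp [sub_eq_add_neg]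
  have key : ∀ ε > 0, u t0 (x0 + d • ee i, y0) - u t0 (x0 - d • ee i, y0) ≤
      lipC n s δ * d + ε * δ := by
    intro ε hε
    have := lip_core0 s R S δ (δ/2) _ _ _ ε t0 y0 u hs hs' hu hb hδ ht0 x0 hx0 hy0 hy0' i rfl hG
      rfl rfl hε (x0 + d • ee i) (by rw [hnx]; exact hd') (by linarith)
    simp only [Zf, Ps, hx, hnx, hrf] at this
    have hth : th s (4*s^2/5) (t0-δ) t0 = ((4*s^2/5) * δ) ^ (1/s) := by
      rw [th]; congr 1; ring
    have hthp : 0 < th s (4*s^2/5) (t0-δ) t0 := by rw [hth]; positivity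
    have hbl := bar_le s _ (kk s (4*s^2/5) (t0-δ) t0) d y0 hthp
      (kk_nonneg (by positivity) (by linarith)) hd.le hy0
    rw [hth] at hbl
    have e : lipC n s δ = (((4*s^2/5) * δ) ^ (1/s)) ^ (-1/2:ℝ) + G * (n+3) * (δ/2) := rfl
    rw [e]
    have h1 : 0 ≤ G * (n+2) * d^2 := by positivity
    rw [hth] at this
    nlinarith
  by_contra hcon
  push Not at hcon
  have h1 := key ((u t0 (x0 + d • ee i, y0) - u t0 (x0 - d • ee i, y0) - lipC n s δ * d)/(2*δ))
    (div_pos (by linarith) (by linarith))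
  rw [div_mul_eq_mul_div, mul_div_mul_right _ _ hδ.ne'] at h1
  linarith

lemma lip_abs (s R S M δ t0 y0 : ℝ) (u : ℝ → En n × ℝ → ℝ) (hs : 0 < s) (hs' : s < 1/2)
    (hu : Sol (1-2*s) R S u) (hM : 0 < M) (hb : Bd R S M u)
    (hδ : 0 < δ) (ht0 : t0 ∈ Icc (-(S-δ)) 0) (x0 : En n) (hx0 : ‖x0‖ < R - δ) (hy0 : 0 ≤ y0)
    (hy0' : y0 < S - δ) (i : Fin n) (d : ℝ) (hd : 0 < d) (hd' : d ≤ δ/2) :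
    |u t0 (x0 + d • ee i, y0) - u t0 (x0 - d • ee i, y0)| ≤ 2 * M * lipC n s δ * d := by
  have key : ∀ c, |c| = 1/(2*M) → c * u t0 (x0 + d • ee i, y0) - c * u t0 (x0 - d • ee i, y0) ≤
      lipC n s δ * d := by
    intro c hc
    refine lip_core s R S δ t0 y0 (fun t p => c * u t p) hs hs' (hu.const_mul c) ?_ hδ ht0 x0 hx0
      hy0 hy0' i d hd hd'
    intro t ht p h1 h2 h3
    rw [abs_mul, hc]
    have := hb t ht p h1 h2 h3
    calc 1/(2*M) * |u t p| ≤ 1/(2*M) * M := by gcongr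
      _ = 1/2 := by field_simp
  have h1 := key (1/(2*M)) (abs_of_pos (by positivity))
  have h2 := key (-(1/(2*M))) (by rw [abs_neg, abs_of_pos (by positivity)])
  have e : 2 * M * lipC n s δ * d = (lipC n s δ * d) * (2*M) := by ring
  rw [abs_le, e]
  rw [← mul_sub, one_div_mul_eq_div, div_le_iff₀ (by positivity)] at h1
  rw [← mul_sub, neg_mul, one_div_mul_eq_div, ← neg_div, div_le_iff₀ (by positivity)] at h2
  constructor <;> linarith

def C1 (n : ℕ) (s δ : ℝ) : ℝ := lipC n s δ + 2/δ

lemma C1_pos (n : ℕ) (s δ : ℝ) (hδ : 0 < δ) : 0 < C1 n s δ := 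
  add_pos (lipC_pos n s δ hδ) (by positivity)

lemma lip (s R S M δ t y : ℝ) (u : ℝ → En n × ℝ → ℝ) (hs : 0 < s) (hs' : s < 1/2)
    (hu : Sol (1-2*s) R S u) (hM : 0 ≤ M) (hb : Bd R S M u)
    (hδ : 0 < δ) (ht : t ∈ Icc (-(S-δ)) 0) (hy : 0 ≤ y)
    (hy' : y < S - δ) (i : Fin n) (h : ℝ) (hh : h ≠ 0) (z : En n) (hz : ‖z‖ < R - δ - |h|) :
    |dq i h (fun x => u t (x, y)) z| ≤ C1 n s δ * M := by
  have hh0 : 0 < |h| := abs_pos.2 hh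
  have ht' : t ∈ Icc (-S) 0 := ⟨by linarith [ht.1], ht.2⟩
  have hzh : ‖z + h • ee i‖ ≤ ‖z‖ + |h| := by
    have := norm_add_le z (h • ee i); rwa [norm_smul_ee] at this
  have b1 := hb t ht' (z + h • ee i, y) (by show ‖z + h • ee i‖ < R; linarith) hy
    (by show y < S; linarith)
  have b2 := hb t ht' (z, y) (by show ‖z‖ < R; linarith) hy (by show y < S; linarith)
  have hl := lipC_pos n s δ hδ
  rw [dq, abs_div, div_le_iff₀ hh0]
  rcases hM.eq_or_lt with h0 | hM
  · rw [← h0] at b1 b2 ⊢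
    rw [abs_nonpos_iff.1 b1, abs_nonpos_iff.1 b2]; simp
  by_cases hs1 : |h| ≤ δ
  · have hm := lip_abs s R S M δ t y u hs hs' hu hM hb hδ ht (z + (h/2) • ee i) (by
      have := norm_add_le z ((h/2) • ee i)
      rw [norm_smul_ee, abs_div, abs_two] at this
      linarith) hy hy' i (|h|/2) (by linarith) (by linarith)
    have e : |u t (z + (h/2) • ee i + (|h|/2) • ee i, y) - u t (z + (h/2) • ee i - (|h|/2) • ee i, y)|
        = |u t (z + h • ee i, y) - u t (z, y)| := by
      rcases abs_cases h with ⟨h1, _⟩ | ⟨h1, _⟩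
      · rw [h1, add_sub_cancel_right, add_assoc, ← add_smul, add_halves]
      · rw [h1, abs_sub_comm, neg_div, neg_smul, sub_neg_eq_add, add_assoc, ← add_smul, add_halves,
          add_neg_cancel_right]
    rw [e] at hm
    refine hm.trans ?_
    have : 0 < 2/δ * M * |h| := by positivity
    unfold C1
    nlinarith
  · push Not at hs1
    have h1 : |u t (z + h • ee i, y) - u t (z, y)| ≤ 2 * M := by
      have := abs_sub (u t (z + h • ee i, y)) (u t (z, y))
      linarith
    refine h1.trans ?_
    have h2 : 0 < lipC n s δ * M * |h| := by positivity
    have h3 : 2 * M ≤ 2/δ * M * |h| := by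
      calc 2 * M = 2/δ * M * δ := by field_simp
        _ ≤ _ := by gcongr
    unfold C1
    nlinarith

lemma DB_sol (s : ℝ) (hs : 0 < s) (hs' : s < 1/2) (m : ℕ) : ∀ δ > 0, ∃ C > 0,
    ∀ (R S M : ℝ) (u : ℝ → En n × ℝ → ℝ), 0 ≤ M → Sol (1-2*s) R S u → Bd R S M u →
    ∀ t ∈ Icc (-(S-δ)) 0, ∀ y, 0 ≤ y → y < S - δ → DB m (C*M) (R-δ) (fun x => u t (x, y)) := by
  induction m with
  | zero =>
    intro δ hδ
    refine ⟨1, one_pos, fun R S M u hM hu hb t ht y hy hy' z hz => ?_⟩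
    rw [one_mul]
    exact hb t ⟨by linarith [ht.1], ht.2⟩ (z, y) (by show ‖z‖ < R; linarith) hy
      (by show y < S; linarith)
  | succ m ih =>
    intro δ hδ
    obtain ⟨C, hC, h⟩ := ih (δ/2) (by linarith)
    have hC1 := C1_pos n s (δ/2) (by linarith)
    refine ⟨C * C1 n s (δ/2), by positivity, fun R S M u hM hu hb t ht y hy hy' i η hη => ?_⟩
    have h1 := h (R - |η| - δ/2) (S - δ/2) (C1 n s (δ/2) * M) _ (by positivity)
      ((hu.diffq i η).mono (by linarith) (by linarith))
      (fun t ht p h1 h2 h3 => lip s R S M (δ/2) t p.2 u hs hs' hu hM hb (by linarith) ht h2 h3 i η hη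
        p.1 (by linarith)) t ⟨by linarith [ht.1], ht.2⟩ y hy (by linarith)
    exact h1.mono (by rw [mul_assoc]) (by linarith)

lemma D2_bound {f : En n × ℝ → ℝ} {x : En n} {y K1 K r : ℝ} (hf : ContDiffAt ℝ 2 f (x, y))
    (hK : 0 ≤ K) (h1 : DB 1 K1 r (fun z => f (z, y))) (h2 : DB 2 K r (fun z => f (z, y)))
    (hx : ‖x‖ < r) (i : Fin n) : |D2 f (x, y) (EuclideanSpace.single i 1, 0)| ≤ K := by
  have e0 : (EuclideanSpace.single i 1 : En n) = ee i := rfl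
  rw [e0]
  have hd := slice2 (v := (ee i, (0:ℝ))) hf
  have hp := DB.pd h1 h2 h2 i
  have hsm : ∀ᶠ σ in 𝓝 (0:ℝ), ‖x‖ + |σ| < r :=
    ContinuousAt.eventually_lt (by fun_prop) (by fun_prop) (by simpa using hx)
  have e : ∀ᶠ σ in 𝓝 (0:ℝ), fderiv ℝ f ((x, y) + σ • (ee i, (0:ℝ))) (ee i, 0) =
      pd i (fun z => f (z, y)) (x + σ • ee i) := by
    filter_upwards [slice1 (v := (ee i, (0:ℝ))) hf, hsm] with σ h3 h4
    have h5 := hasDerivAt_pd h1 h2 x i σ h4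
    refine h3.unique (h5.congr_of_eventuallyEq (Eventually.of_forall fun τ => ?_))
    simp
  rw [← Real.norm_eq_abs]
  refine hd.le_of_lip' hK ?_
  filter_upwards [e, hsm] with σ h3 h4
  rw [h3, e.self_of_nhds]
  have := hp.bound1 x i σ h4
  simpa using this

lemma TD (s : ℝ) (hs : 0 < s) (hs' : s < 1/2) : ∀ δ > 0, ∃ C > 0,
    ∀ (R S M : ℝ) (u : ℝ → En n × ℝ → ℝ), 0 ≤ M → Sol (1-2*s) R S u → Bd R S M u →
    ∀ t ∈ Icc (-(S-δ)) 0, ∀ x : En n, ‖x‖ < R-δ → ∀ L, NormalDerivLimit (1-2*s) (u t) x L →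
    |L| ≤ C * M := by
  intro δ hδ
  obtain ⟨K1, hK1, H1⟩ := DB_sol (n := n) s hs hs' 1 (δ/2) (by linarith)
  obtain ⟨K2, hK2, H2⟩ := DB_sol (n := n) s hs hs' 2 (δ/2) (by linarith)
  obtain ⟨l, hl⟩ : ∃ l, l = δ/2 := ⟨_, rfl⟩
  have hl0 : 0 < l := by linarith
  set a := 1-2*s with ha
  have ha0 : 0 < a := by linarith
  refine ⟨l^a*(8/l) + l^a * (n * K2) * l, by positivity,
    fun R S M u hM hu hb t ht x hx L hL => ?_⟩
  have hSδ : δ ≤ S := by linarith [ht.1, ht.2]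
  have ht' : t ∈ Icc (-S) 0 := ⟨by linarith [ht.1], ht.2⟩
  have hint : ∀ y, 0 < y → y < l → ContDiffAt ℝ 2 (u t) (x, y) ∧
      lap (u t) (x, y) + a / y * fderiv ℝ (u t) (x, y) (0, 1) = 0 := fun y h1 h2 =>
    hu.int t ht' (x, y) (by show ‖x‖ < R; linarith) h1 (by show y < S; linarith)
  have hline : ∀ y : ℝ, HasDerivAt (fun y : ℝ => ((x, y) : En n × ℝ)) (0, 1) y := fun y =>
    (hasDerivAt_const y x).prodMk (hasDerivAt_id y)
  -- MVT
  obtain ⟨y1, hy1, he1⟩ := exists_hasDerivAt_eq_slope (fun y => u t (x, y))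
    (fun y => fderiv ℝ (u t) (x, y) (0, 1)) (a := l/4) (b := l/2) (by linarith)
    (fun y hy => by
      have := (hint y (by linarith [hy.1]) (by linarith [hy.2])).1.differentiableAt (by simp)
      exact (this.hasFDerivAt.comp_hasDerivAt y (hline y)).continuousAt.continuousWithinAt)
    (fun y hy => by
      have := (hint y (by linarith [hy.1]) (by linarith [hy.2])).1.differentiableAt (by simp)
      exact this.hasFDerivAt.comp_hasDerivAt y (hline y))
  have hy1p : 0 < y1 := by linarith [hy1.1]
  have hy1l : y1 < l := by linarith [hy1.2]
  have hf1 : |fderiv ℝ (u t) (x, y1) (0, 1)| ≤ 8 / l * M := by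
    rw [he1, abs_div, abs_of_pos (by linarith : 0 < l/2 - l/4), div_le_iff₀ (by linarith)]
    have b1 := hb t ht' (x, l/2) (by show ‖x‖ < R; linarith) (by show 0 ≤ l/2; linarith)
      (by show l/2 < S; linarith)
    have b2 := hb t ht' (x, l/4) (by show ‖x‖ < R; linarith) (by show 0 ≤ l/4; linarith)
      (by show l/4 < S; linarith)
    have e : 8/l*M*(l/2-l/4) = 2*M := by field_simp; ring
    rw [e]
    exact (abs_sub _ _).trans (by linarith)
  have hv1 : |y1 ^ a * fderiv ℝ (u t) (x, y1) (0, 1)| ≤ l^a*(8/l*M) := by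
    rw [abs_mul, abs_of_nonneg (by positivity)]
    gcongr
  have hder : ∀ y, 0 < y → y < l → HasDerivAt (fun y => y ^ a * fderiv ℝ (u t) (x, y) (0, 1))
      (- (y ^ a * ∑ i : Fin n, D2 (u t) (x, y) (EuclideanSpace.single i 1, 0))) y := by
    intro y h1 h2
    obtain ⟨h3, h4⟩ := hint y h1 h2
    have d1 := (fderiv_diff (0, 1) h3).hasFDerivAt.comp_hasDerivAt y (hline y)
    have d2 : HasDerivAt (fun η : ℝ => η ^ a) (a * y ^ (a-1)) y :=
      Real.hasDerivAt_rpow_const (Or.inl h1.ne')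
    refine (d2.mul d1).congr_deriv ?_
    have e : y ^ (a-1) = y ^ a / y := by rw [Real.rpow_sub_one h1.ne']
    rw [e]
    simp only [lap] at h4
    change _ + y ^ a * D2 (u t) (x, y) (0, 1) = _
    simp only [Function.comp]
    linear_combination y ^ a * h4
  have hbd : ∀ y, 0 < y → y < y1 → |y ^ a * fderiv ℝ (u t) (x, y) (0, 1)| ≤
      (l^a*(8/l) + l^a * (n * K2) * l) * M := by
    intro y h1 h2
    obtain ⟨c, hc1, hc2⟩ := exists_hasDerivAt_eq_slope _ _ h2
      (fun z hz => (hder z (by linarith [hz.1]) (by linarith [hz.2])).continuousAt.continuousWithinAt)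
      (fun z hz => hder z (by linarith [hz.1]) (by linarith [hz.2]))
    have hc0 : 0 < c := by linarith [hc1.1]
    have hcl : c < l := by linarith [hc1.2]
    have hsum : |∑ i : Fin n, D2 (u t) (x, c) (EuclideanSpace.single i 1, 0)| ≤ n * (K2 * M) := by
      refine (Finset.abs_sum_le_sum_abs _ _).trans ?_
      have htt : t ∈ Icc (-(S-δ/2)) 0 := ⟨by linarith [ht.1], ht.2⟩
      have := Finset.sum_le_card_nsmul Finset.univ (fun i : Fin n =>
        |D2 (u t) (x, c) (EuclideanSpace.single i 1, 0)|) (K2 * M) (fun i _ =>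
          D2_bound (hint c hc0 hcl).1 (by positivity)
            (H1 R S M u hM hu hb t htt c hc0.le (by linarith))
            (H2 R S M u hM hu hb t htt c hc0.le (by linarith)) (by linarith) i)
      simpa using this
    have hder' : |-(c ^ a * ∑ i : Fin n, D2 (u t) (x, c) (EuclideanSpace.single i 1, 0))| ≤
        l^a * (n * (K2 * M)) := by
      rw [abs_neg, abs_mul, abs_of_nonneg (by positivity)]
      gcongr
    rw [eq_div_iff (by linarith)] at hc2
    have h5 : |y1 ^ a * fderiv ℝ (u t) (x, y1) (0, 1) - y ^ a * fderiv ℝ (u t) (x, y) (0, 1)| ≤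
        l^a * (n * (K2 * M)) * l := by
      rw [← hc2, abs_mul, abs_of_pos (by linarith : 0 < y1 - y)]
      gcongr
      linarith
    have := abs_sub_abs_le_abs_sub (y ^ a * fderiv ℝ (u t) (x, y) (0, 1)) (y1 ^ a * fderiv ℝ (u t) (x, y1) (0, 1))
    rw [abs_sub_comm] at this
    linarith
  refine le_of_tendsto hL.abs ?_
  have c5 : ∀ᶠ y in 𝓝[>] (0:ℝ), y < y1 := nhdsWithin_le_nhds (eventually_lt_nhds hy1p)
  filter_upwards [c5, self_mem_nhdsWithin] with y h1 h2
  exact hbd y h2 h1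

lemma TD' (s : ℝ) (hs : 0 < s) (hs' : s < 1/2) (m : ℕ) : ∀ δ > 0, ∃ C > 0,
    ∀ (R S M : ℝ) (u : ℝ → En n × ℝ → ℝ), 0 ≤ M → Sol (1-2*s) R S u → Bd R S M u →
    ∀ t1 ∈ Icc (-(S-δ)) 0, ∀ t2 ∈ Icc (-(S-δ)) 0, t1 ≠ t2 →
    DB m (C*M) (R-δ) (fun x => (u t2 (x, 0) - u t1 (x, 0))/(t2-t1)) := by
  induction m with
  | zero =>
    intro δ hδ
    obtain ⟨C, hC, H⟩ := TD (n := n) s hs hs' δ hδ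
    refine ⟨C, hC, fun R S M u hM hu hb t1 h1 t2 h2 hne z hz => ?_⟩
    have hne' : t2 - t1 ≠ 0 := sub_ne_zero.2 hne.symm
    rw [abs_div, div_le_iff₀ (abs_pos.2 hne')]
    have hz' : ‖z‖ < R := by linarith
    have hex : ∀ t ∈ Icc (-(S-δ)) 0, ∃ L, HasDerivWithinAt (fun τ => u τ (z, 0)) L
        (Icc (-(S-δ)) 0) t ∧ |L| ≤ C * M := by
      intro t ht
      obtain ⟨L, d1, d2⟩ := hu.bd t ⟨by linarith [ht.1], ht.2⟩ z hz'
      exact ⟨L, d1.mono (Icc_subset_Icc (by linarith) le_rfl), H R S M u hM hu hb t ht z hz L d2⟩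
    choose! g hg1 hg2 using hex
    exact (convex_Icc _ _).norm_image_sub_le_of_norm_hasDerivWithin_le hg1 hg2 h1 h2
  | succ m ih =>
    intro δ hδ
    obtain ⟨C, hC, h⟩ := ih (δ/2) (by linarith)
    have hC1 := C1_pos n s (δ/2) (by linarith)
    refine ⟨C * C1 n s (δ/2), by positivity,
      fun R S M u hM hu hb t1 ht1 t2 ht2 hne i η hη => ?_⟩
    have h1 := h (R - |η| - δ/2) (S - δ/2) (C1 n s (δ/2) * M) _ (by positivity)
      ((hu.diffq i η).mono (by linarith) (by linarith))
      (fun t ht p h1 h2 h3 => lip s R S M (δ/2) t p.2 u hs hs' hu hM hb (by linarith) ht h2 h3 i η hη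
        p.1 (by linarith)) t1 ⟨by linarith [ht1.1], ht1.2⟩ t2 ⟨by linarith [ht2.1], ht2.2⟩ hne
    refine (h1.mono (by rw [mul_assoc]) (by linarith)).congr fun z _ => ?_
    simp only [dq]
    ring

end

section
variable {n : ℕ}

lemma in_ball {p : En n × ℝ} (h1 : ‖p.1‖ < 7/10) (h2 : 0 ≤ p.2) (h3 : p.2 < 7/10) :
    ‖p.1‖ ^ 2 + p.2 ^ 2 < (1:ℝ) ^ 2 := by
  nlinarith [norm_nonneg p.1]

lemma isOpen_halfBall (r : ℝ) : IsOpen (halfBall n r) := by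
  have h1 : IsOpen {p : En n × ℝ | ‖p.1‖ ^ 2 + p.2 ^ 2 < r ^ 2} :=
    isOpen_lt (by fun_prop) (by fun_prop)
  have h2 : IsOpen {p : En n × ℝ | 0 < p.2} := isOpen_lt (by fun_prop) (by fun_prop)
  exact h1.inter h2

lemma Sol.of {a : ℝ} {u : ℝ → En n × ℝ → ℝ} (hu : IsFracHeatSolution a u) :
    Sol a (7/10) (7/10) u := by
  obtain ⟨h1, h2, h3⟩ := hu
  refine ⟨h1.mono ?_, ?_, ?_⟩
  · rintro ⟨t, p⟩ ⟨⟨a1, a2⟩, a3, a4, a5⟩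
    exact ⟨⟨by linarith, a2⟩, (in_ball a3 a4 a5).le, a4⟩
  · intro t ht p a3 a4 a5
    obtain ⟨c, e⟩ := h2 t ⟨by linarith [ht.1], ht.2⟩
    have hp : p ∈ halfBall n 1 := ⟨in_ball a3 a4.le a5, a4⟩
    exact ⟨c.contDiffAt ((isOpen_halfBall 1).mem_nhds hp), e p hp⟩
  · intro t ht x hx
    obtain ⟨d, e⟩ := h3 t ⟨by linarith [ht.1], ht.2⟩ x (by show ‖x‖ < 1; linarith)
    exact ⟨_, d.hasDerivWithinAt.mono (fun τ hτ => ⟨by linarith [hτ.1], hτ.2⟩), e⟩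

lemma Bd.of {a U : ℝ} {u : ℝ → En n × ℝ → ℝ} (hu : IsFracHeatSolution a u)
    (hU : ∀ t ∈ Icc (-1 : ℝ) 0, ∀ p ∈ halfBall n 1, |u t p| ≤ U) : Bd (7/10) (7/10) U u := by
  intro t ht p h1 h2 h3
  have ht' : t ∈ Icc (-1:ℝ) 0 := ⟨by linarith [ht.1], ht.2⟩
  rcases h2.lt_or_eq with h | h
  · exact hU t ht' p ⟨in_ball h1 h2 h3, h⟩
  · obtain ⟨x, y⟩ := p
    simp only at h h1
    subst h
    have hc := (Sol.of hu).cont (t, (x, 0)) ⟨ht, h1, le_rfl, by norm_num⟩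
    have hl : Tendsto (fun y : ℝ => (t, (x, y))) (𝓝[>] 0) (𝓝[Icc (-(7/10)) 0 ×ˢ
        {p : En n × ℝ | ‖p.1‖ < 7/10 ∧ 0 ≤ p.2 ∧ p.2 < 7/10}] (t, (x, 0))) := by
      refine tendsto_nhdsWithin_iff.2 ⟨?_, ?_⟩
      · have : ContinuousAt (fun y : ℝ => (t, (x, y))) 0 := by fun_prop
        exact this.tendsto.mono_left nhdsWithin_le_nhds
      · filter_upwards [Ioo_mem_nhdsGT (by norm_num : (0:ℝ) < 7/10)] with y hy
        exact ⟨ht, h1, hy.1.le, hy.2⟩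
    refine le_of_tendsto ((hc.tendsto.comp hl).abs) ?_
    filter_upwards [Ioo_mem_nhdsGT (by norm_num : (0:ℝ) < 7/10)] with y hy
    exact hU t ht' (x, y) ⟨in_ball h1 hy.1.le hy.2, hy.1⟩

end

/-- **Interior smoothness for the fractional heat equation** (Proposition 4.1): bounded
solutions of the localized fractional heat equation are `C^∞` in `x` in the interior, with
estimates on all spatial derivatives and on the time derivative of each spatial derivative
on `{y = 0}`, all controlled by the `L^∞` norm of `u`. -/
theorem fractional_heat_interior_smoothness (n : ℕ) (hn : 1 ≤ n) (s : ℝ)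
    (hs : s ∈ Ioo (0 : ℝ) (1/2)) (k : ℕ) (hk : 1 ≤ k) :
    ∃ C > 0, ∀ (u : ℝ → En n × ℝ → ℝ) (U0 : ℝ), 0 ≤ U0 →
      IsFracHeatSolution (1 - 2*s) u →
      (∀ t ∈ Icc (-1 : ℝ) 0, ∀ p ∈ halfBall n 1, |u t p| ≤ U0) →
      (∀ t ∈ Icc (-(1:ℝ)/2) 0, ∀ p ∈ halfBallWithBase n (1/2),
        ContDiffAt ℝ k (fun x' => u t (x', p.2)) p.1 ∧
        ‖iteratedFDeriv ℝ k (fun x' => u t (x', p.2)) p.1‖ ≤ C * U0) ∧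
      (∀ x ∈ flatBall n (1/2), ∀ t ∈ Icc (-(1:ℝ)/2) 0,
        DifferentiableWithinAt ℝ
          (fun τ => iteratedFDeriv ℝ k (fun x' => u τ (x', 0)) x) (Icc (-(1:ℝ)/2) 0) t ∧
        ‖derivWithin (fun τ => iteratedFDeriv ℝ k (fun x' => u τ (x', 0)) x)
            (Icc (-(1:ℝ)/2) 0) t‖ ≤ C * U0) := by
  obtain ⟨hs0, hs1⟩ := hs
  have E1 := fun m => DB_sol (n := n) s hs0 hs1 m (1/5) (by norm_num)
  have E2 := fun m => TD' (n := n) s hs0 hs1 m (1/5) (by norm_num)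
  choose C hC H1 using E1
  choose C' hC' H2 using E2
  have hCk := hC k
  have hCk' := hC' k
  have p1 : 0 ≤ (n:ℝ)^k * C k := by positivity
  have p2 : 0 ≤ (n:ℝ)^k * C' k := by positivity
  refine ⟨(n:ℝ)^k * C k + (n:ℝ)^k * C' k + 1, by linarith, fun u U0 hU hu hub => ?_⟩
  have hsol := Sol.of hu
  have hbd := Bd.of hu hub
  have eR : (7/10:ℝ) - 1/5 = 1/2 := by norm_num
  have eI : Icc (-((7/10:ℝ) - 1/5)) 0 = Icc (-(1:ℝ)/2) 0 := by norm_num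
  have D1 : ∀ t ∈ Icc (-(1:ℝ)/2) 0, ∀ y, 0 ≤ y → y < 1/2 → ∀ m,
      DB m (C m * U0) (1/2) (fun x => u t (x, y)) := by
    intro t ht y hy hy' m
    have := H1 m (7/10) (7/10) U0 u hU hsol hbd t (by rw [eI]; exact ht) y hy (by rw [eR]; exact hy')
    rwa [eR] at this
  have D2' : ∀ t1 ∈ Icc (-(1:ℝ)/2) 0, ∀ t2 ∈ Icc (-(1:ℝ)/2) 0, t1 ≠ t2 → ∀ m,
      DB m (C' m * U0) (1/2) (fun x => (u t2 (x, 0) - u t1 (x, 0))/(t2-t1)) := by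
    intro t1 h1 t2 h2 hne m
    have := H2 m (7/10) (7/10) U0 u hU hsol hbd t1 (by rw [eI]; exact h1) t2 (by rw [eI]; exact h2) hne
    rwa [eR] at this
  constructor
  · intro t ht p hp
    obtain ⟨hp1, hp2⟩ := hp
    have hx : ‖p.1‖ < 1/2 := by
      by_contra hcon
      push Not at hcon
      nlinarith [sq_nonneg p.2]
    have hy : p.2 < 1/2 := by
      by_contra hcon
      push Not at hcon
      nlinarith [sq_nonneg ‖p.1‖]
    have hD := D1 t ht p.2 hp2 hy
    refine ⟨DB.contDiffAt (fun m => ⟨_, hD m⟩) k p.1 hx, ?_⟩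
    refine (DB.norm_le (fun m => ⟨_, hD m⟩) k (hD k) p.1 hx).trans ?_
    nlinarith [mul_nonneg p2 hU]
  · intro x hx t ht
    have hx : ‖x‖ < 1/2 := hx
    have hud : UniqueDiffWithinAt ℝ (Icc (-(1:ℝ)/2) 0) t :=
      uniqueDiffOn_Icc (by norm_num) t ht
    have hne : (𝓝[Icc (-(1:ℝ)/2) 0 \ {t}] t).NeBot :=
      accPt_principal_iff_nhdsWithin.1 (uniqueDiffWithinAt_iff_accPt.1 hud)
    have hex : ∀ z : En n, ‖z‖ < 1/2 → ∃ L, HasDerivWithinAt (fun τ => u τ (z, 0)) L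
        (Icc (-(1:ℝ)/2) 0) t := by
      intro z hz
      obtain ⟨L, h1, -⟩ := hsol.bd t ⟨by linarith [ht.1], ht.2⟩ z (by linarith)
      exact ⟨L, h1.mono (Icc_subset_Icc (by norm_num) le_rfl)⟩
    choose! g hg using hex
    set F : ℝ → En n → ℝ := fun τ z => (u τ (z, 0) - u t (z, 0))/(τ-t) with hF
    have hFl : ∀ z : En n, ‖z‖ < 1/2 → Tendsto (fun τ => F τ z)
        (𝓝[Icc (-(1:ℝ)/2) 0 \ {t}] t) (𝓝 (g z)) := by
      intro z hz
      refine (hasDerivWithinAt_iff_tendsto_slope.1 (hg z hz)).congr fun τ => ?_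
      rw [slope_def_field]
    have hmem : ∀ᶠ τ in 𝓝[Icc (-(1:ℝ)/2) 0 \ {t}] t, τ ∈ Icc (-(1:ℝ)/2) 0 ∧ t ≠ τ := by
      filter_upwards [self_mem_nhdsWithin] with τ hτ
      exact ⟨hτ.1, fun h => hτ.2 h.symm⟩
    have hgDB : ∀ m, DB m (C' m * U0) (1/2) g := fun m =>
      DB.lim (F := F) (hmem.mono fun τ hτ => D2' t ht τ hτ.1 hτ.2 m) hFl
    have hgc := DB.contDiffAt (fun m => ⟨_, hgDB m⟩) k x hx
    have hc : ∀ τ ∈ Icc (-(1:ℝ)/2) 0, ContDiffAt ℝ k (fun z => u τ (z, 0)) x := fun τ hτ =>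
      DB.contDiffAt (fun m => ⟨_, D1 τ hτ 0 le_rfl (by norm_num) m⟩) k x hx
    have hz := DB.tendsto_iter (l := 𝓝[Icc (-(1:ℝ)/2) 0 \ {t}] t) (F := fun τ z => F τ z - g z)
      (K := fun m => C' m * U0 + C' m * U0) (r := 1/2)
      (hmem.mono fun τ hτ m => (D2' t ht τ hτ.1 hτ.2 m).sub (hgDB m))
      (fun z hz => by simpa using (hFl z hz).sub_const (g z)) k x hx
    have hder : HasDerivWithinAt (fun τ => iteratedFDeriv ℝ k (fun x' => u τ (x', 0)) x)
        (iteratedFDeriv ℝ k g x) (Icc (-(1:ℝ)/2) 0) t := by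
      rw [hasDerivWithinAt_iff_tendsto_slope, tendsto_iff_norm_sub_tendsto_zero]
      refine hz.congr' ?_
      filter_upwards [hmem] with τ hτ
      have e1 : F τ = (τ - t)⁻¹ • ((fun z => u τ (z, 0)) - fun z => u t (z, 0)) := by
        funext z
        simp [hF, div_eq_inv_mul]
      have c1 : ContDiffAt ℝ k ((fun z => u τ (z, 0)) - fun z => u t (z, 0)) x :=
        (hc τ hτ.1).sub (hc t ht)
      have e2 : iteratedFDeriv ℝ k (F τ) x = slope
          (fun τ => iteratedFDeriv ℝ k (fun x' => u τ (x', 0)) x) t τ := by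
        rw [e1, iteratedFDeriv_const_smul_apply c1, iteratedFDeriv_sub_apply (hc τ hτ.1) (hc t ht)]
        rfl
      have c2 : ContDiffAt ℝ k (F τ) x :=
        DB.contDiffAt (fun m => ⟨_, D2' t ht τ hτ.1 hτ.2 m⟩) k x hx
      rw [← e2, ← iteratedFDeriv_sub_apply c2 hgc]
      rfl
    refine ⟨hder.differentiableWithinAt, ?_⟩
    rw [hder.derivWithin hud]
    refine (DB.norm_le (fun m => ⟨_, hgDB m⟩) k (hgDB k) x hx).trans ?_
    nlinarith [mul_nonneg p1 hU]

end
end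

section
/- Let f : ℝ^n → ℝ be bounded and measurable, and C^{1,1} on B_1^0. For x ∈ ℝ^n and y > 0 define u(x,y) = ∫_{ℝ^n} f(x+z) P(z,y) dz, where P(z,y) = C_{n,a} y^{1−a} (|z|² + y²)^{−(n+1−a)/2} and C_{n,a} > 0 is the constant for which ∫_{ℝ^n} P(z,y) dz = 1 for every y > 0. For x ∈ B_{1/2}^0 define g(x) = C_{n,a} ∫_{ℝ^n} (f(x+z) − f(x)) |z|^{−(n+1−a)} dz; this integral converges absolutely. Then there is a constant C depending only on n and a such that for all x ∈ B_{1/2}^0 and all y > 0: |u(x,y) − f(x) − y^{1−a} g(x)| ≤ C y² ( sup_{ℝ^n} |f| + ‖f‖_{C^{1,1}(B_1^0)} ). -/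
open Set Filter Topology MeasureTheory
open scoped RealInnerProductSpace

noncomputable section

lemma aux_min_integrable (n : ℕ) (hn : 1 ≤ n) (s : ℝ) (hs : s ∈ Ioo (0 : ℝ) (1/2)) :
    Integrable (fun z : En n => min ‖z‖ 1 * ‖z‖ ^ (-((n : ℝ) + 2*s))) := by
  haveI : Nonempty (Fin n) := ⟨⟨0, hn⟩⟩
  have key := integrable_fun_norm_addHaar (volume : Measure (En n))
    (f := fun r : ℝ => min r 1 * r ^ (-((n : ℝ) + 2*s)))
  rw [key]
  obtain ⟨h0, h1⟩ := hs
  have hfr : Module.finrank ℝ (En n) = n := by simp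
  rw [hfr]
  have hpow : ∀ y : ℝ, 0 < y → y ^ (n - 1) * y ^ (-((n : ℝ) + 2*s)) = y ^ (-1 - 2*s) := by
    intro y hy
    rw [← Real.rpow_natCast, ← Real.rpow_add hy, Nat.cast_sub hn]
    congr 1
    push_cast
    ring
  rw [← Ioc_union_Ioi_eq_Ioi (zero_le_one' ℝ)]
  refine IntegrableOn.union ?_ ?_
  · rw [integrableOn_Ioc_iff_integrableOn_Ioo]
    refine ((intervalIntegral.integrableOn_Ioo_rpow_iff (s := -2*s) one_pos).2
      (by linarith)).congr_fun ?_ measurableSet_Ioo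
    intro y hy
    simp only [smul_eq_mul]
    rw [min_eq_left hy.2.le, mul_left_comm, hpow y hy.1]
    nth_rewrite 2 [← Real.rpow_one y]
    rw [← Real.rpow_add hy.1]
    congr 1
    ring
  · refine (integrableOn_Ioi_rpow_of_lt (a := -1 - 2*s) (by linarith) one_pos).congr_fun ?_
      measurableSet_Ioi
    intro y hy
    have hy' : (1:ℝ) < y := hy
    simp only [smul_eq_mul]
    rw [min_eq_right hy'.le, one_mul, hpow y (by linarith)]

lemma aux_minsq_integrable (n : ℕ) (hn : 1 ≤ n) (s : ℝ) (hs : s ∈ Ioo (0 : ℝ) (1/2)) :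
    Integrable (fun z : En n => min (‖z‖^2) 1 * ‖z‖ ^ (-((n : ℝ) + 2*s))) := by
  refine (aux_min_integrable n hn s hs).mono' (by fun_prop) (ae_of_all _ fun z => ?_)
  have h1 : 0 ≤ ‖z‖ ^ (-((n : ℝ) + 2*s)) := Real.rpow_nonneg (norm_nonneg _) _
  have h2 : 0 ≤ min (‖z‖^2) 1 := le_min (by positivity) (by norm_num)
  rw [Real.norm_of_nonneg (mul_nonneg h2 h1)]
  refine mul_le_mul_of_nonneg_right ?_ h1
  rcases le_total ‖z‖ 1 with h | h
  · rw [min_eq_left h]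
    exact (min_le_left _ _).trans (by nlinarith [norm_nonneg z])
  · rw [min_eq_right h]
    exact min_le_right _ _

lemma aux_kernel_le (q r y : ℝ) (hq : 0 < q) (hr : 0 < r) (hy : 0 < y) :
    0 ≤ r ^ (-(2*q)) - (r^2 + y^2) ^ (-q) ∧
    r ^ (-(2*q)) - (r^2 + y^2) ^ (-q) ≤ r ^ (-(2*q)) ∧
    r^2 * (r ^ (-(2*q)) - (r^2 + y^2) ^ (-q)) ≤ q * y^2 * r ^ (-(2*q)) := by
  have hr2 : 0 < r^2 := by positivity
  have e1 : r ^ (-(2*q)) = (r^2) ^ (-q) := by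
    rw [← Real.rpow_natCast, ← Real.rpow_mul hr.le]
    congr 1
    push_cast
    ring
  rw [e1]
  have hp : 0 < (r^2) ^ (-q) := Real.rpow_pos_of_pos hr2 _
  refine ⟨?_, ?_, ?_⟩
  · rw [sub_nonneg]
    exact Real.rpow_le_rpow_of_nonpos hr2 (by nlinarith) (by linarith)
  · have : 0 ≤ (r^2 + y^2) ^ (-q) := by positivity
    linarith
  · set x := y^2 / r^2 with hx
    have hxp : 0 < x := by positivity
    have e2 : r^2 + y^2 = r^2 * (1 + x) := by rw [hx]; field_simp
    have e3 : y^2 = r^2 * x := by rw [hx]; field_simp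
    rw [e2, Real.mul_rpow hr2.le (by positivity), e3]
    have hb : 1 - q * x ≤ (1 + x) ^ (-q) := by
      rw [Real.rpow_def_of_pos (by positivity)]
      have a1 := Real.add_one_le_exp (Real.log (1+x) * (-q))
      have a2 := Real.log_le_sub_one_of_pos (show 0 < 1 + x by positivity)
      nlinarith
    have : r^2 * ((r^2) ^ (-q)) * (1 - (1+x)^(-q)) ≤ r^2 * ((r^2) ^ (-q)) * (q * x) :=
      mul_le_mul_of_nonneg_left (by linarith) (by positivity)
    nlinarith

/-- pointwise bound of the weighted kernel difference -/
lemma aux_weighted (n : ℕ) (s : ℝ) (hs : 0 < s) (y : ℝ) (hy : 0 < y) (z : En n) :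
    ‖z‖^2 * |(‖z‖^2 + y^2) ^ (-(((n : ℝ) + 2*s)/2)) - ‖z‖ ^ (-((n : ℝ) + 2*s))| ≤
      (1 + ((n : ℝ) + 2*s)/2) * (y ^ (2 - ((n : ℝ) + 2*s)) *
        (min (‖y⁻¹ • z‖^2) 1 * ‖y⁻¹ • z‖ ^ (-((n : ℝ) + 2*s)))) := by
  set q := ((n : ℝ) + 2*s)/2 with hq
  have hp : (n : ℝ) + 2*s = 2*q := by rw [hq]; ring
  have hq0 : 0 < q := by rw [hq]; positivity
  rw [hp]
  rcases eq_or_ne z 0 with rfl | hz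
  · simp
  have hr : 0 < ‖z‖ := norm_pos_iff.2 hz
  rw [norm_smul, norm_inv, Real.norm_of_nonneg hy.le]
  generalize ‖z‖ = r at hr
  obtain ⟨k1, k2, k3⟩ := aux_kernel_le q r y hq0 hr hy
  rw [abs_sub_comm, abs_of_nonneg k1]
  have e : y ^ (2 - 2*q) * (min ((y⁻¹ * r)^2) 1 * (y⁻¹ * r) ^ (-(2*q)))
      = min (r^2) (y^2) * r ^ (-(2*q)) := by
    rw [Real.mul_rpow (by positivity) hr.le, Real.inv_rpow hy.le, Real.rpow_neg hy.le, inv_inv,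
      sub_eq_add_neg, Real.rpow_add hy, Real.rpow_neg hy.le]
    have h2 : y ^ (2:ℝ) = y^2 := by norm_num
    have h3 : min (r^2) (y^2) = y^2 * min ((y⁻¹ * r)^2) 1 := by
      rw [mul_min_of_nonneg _ _ (by positivity)]
      congr 1
      · field_simp
      · ring
    rw [h2, h3]
    have : y ^ (2*q) ≠ 0 := (Real.rpow_pos_of_pos hy _).ne'
    field_simp
  rw [e]
  have hP : 0 < r ^ (-(2*q)) := Real.rpow_pos_of_pos hr _
  rcases le_total (r^2) (y^2) with h | h
  · rw [min_eq_left h]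
    have : r^2 * (r ^ (-(2*q)) - (r^2 + y^2) ^ (-q)) ≤ r^2 * r ^ (-(2*q)) :=
      mul_le_mul_of_nonneg_left k2 (by positivity)
    have : 0 ≤ q * (r^2 * r ^ (-(2*q))) := by positivity
    linarith
  · rw [min_eq_right h]
    have : 0 ≤ y^2 * r ^ (-(2*q)) := by positivity
    linarith

lemma aux_scale (n : ℕ) (s : ℝ) (y : ℝ) (hy : 0 < y) (H : En n → ℝ) :
    y ^ (2*s) * ∫ z : En n, y ^ (2 - ((n : ℝ) + 2*s)) * H (y⁻¹ • z) = y^2 * ∫ z, H z := by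
  rw [integral_const_mul, Measure.integral_comp_inv_smul_of_nonneg _ _ hy.le]
  have hfr : Module.finrank ℝ (En n) = n := by simp
  rw [hfr, smul_eq_mul, ← Real.rpow_natCast y n, ← Real.rpow_natCast y 2, ← mul_assoc, ← mul_assoc,
    ← Real.rpow_add hy, ← Real.rpow_add hy]
  congr 2
  push_cast
  ring

/-- **Lemma 2.1 (global expansion).** For bounded `f` that is `C^{1,1}` in `B_1`, the
Poisson extension `u(x,y) = ∫ f(x+z) P(z,y) dz` to the upper half space satisfies
`u(x,y) = f(x) + y^{1-a} g(x) + O(y²)` for `x ∈ B_{1/2}`, where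
`g(x) = C_{n,a} ∫ (f(x+z) - f(x)) |z|^{-(n+1-a)} dz` (here `1 - a = 2s`, `n+1-a = n+2s`). -/
theorem global_expansion_of_extension (n : ℕ) (hn : 1 ≤ n) (s : ℝ)
    (hs : s ∈ Ioo (0 : ℝ) (1/2)) :
    ∃ C > 0, ∀ (f : En n → ℝ) (f' : En n → (En n →L[ℝ] ℝ)) (Cna M0 M1 M2 : ℝ),
      Measurable f →
      (∀ x : En n, |f x| ≤ M0) →
      (∀ x ∈ flatBall n 1, HasFDerivAt f (f' x) x) →
      (∀ x ∈ flatBall n 1, ‖f' x‖ ≤ M1) →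
      (∀ x ∈ flatBall n 1, ∀ x' ∈ flatBall n 1, ‖f' x - f' x'‖ ≤ M2 * ‖x - x'‖) →
      0 < Cna →
      (∀ y : ℝ, 0 < y →
        (∫ z : En n, Cna * y ^ (2*s) * (‖z‖^2 + y^2) ^ (-(((n : ℝ) + 2*s)/2))) = 1) →
      ∀ x ∈ flatBall n (1/2),
        Integrable (fun z : En n => (f (x + z) - f x) * ‖z‖ ^ (-((n : ℝ) + 2*s))) ∧
        ∀ y : ℝ, 0 < y →
          |(∫ z : En n, f (x + z) * (Cna * y ^ (2*s) * (‖z‖^2 + y^2) ^ (-(((n : ℝ) + 2*s)/2))))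
            - f x
            - y ^ (2*s) * (Cna * ∫ z : En n, (f (x + z) - f x) * ‖z‖ ^ (-((n : ℝ) + 2*s)))| ≤
            C * y^2 * (M0 + M1 + M2) := by
  haveI : Nonempty (Fin n) := ⟨⟨0, hn⟩⟩
  set p := (n : ℝ) + 2*s with hpdef
  set I : ℝ := ∫ z : En n, (‖z‖^2 + 1^2) ^ (-(p/2)) with hI
  set H : En n → ℝ := fun z => min (‖z‖^2) 1 * ‖z‖ ^ (-p) with hH
  set A : ℝ := ∫ z, H z with hA
  have hp0 : 0 < p := by have := hs.1; positivity
  have hHint : Integrable H := aux_minsq_integrable n hn s hs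
  have hA0 : 0 ≤ A := integral_nonneg fun z =>
    mul_nonneg (le_min (by positivity) (by norm_num)) (Real.rpow_nonneg (norm_nonneg _) _)
  have hhint := aux_min_integrable n hn s hs
  rw [← hpdef] at hhint
  refine ⟨|I⁻¹| * ((1 + p/2) * A) * 8 + 1, by positivity, ?_⟩
  intro f f' Cna M0 M1 M2 hfm hf0 hfd hf1 hf2 hCna hnorm x hx
  have hx : ‖x‖ < 1/2 := hx
  have hM0 : 0 ≤ M0 := (abs_nonneg _).trans (hf0 0)
  have hxm : x ∈ flatBall n 1 := show ‖x‖ < 1 by linarith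
  have hM1 : 0 ≤ M1 := (norm_nonneg _).trans (hf1 x hxm)
  have hM2 : 0 ≤ M2 := by
    set e : En n := EuclideanSpace.single (Classical.arbitrary (Fin n)) (1/2 : ℝ) with he
    have hne : ‖e‖ = 1/2 := by rw [he]; simp
    have h := (norm_nonneg _).trans (hf2 e (show ‖e‖ < 1 by rw [hne]; norm_num) 0
      (show ‖(0 : En n)‖ < 1 by simp))
    rw [sub_zero, hne] at h
    linarith
  have hCI : Cna = I⁻¹ := by
    have h := hnorm 1 one_pos
    rw [integral_const_mul, Real.one_rpow, mul_one] at h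
    exact eq_inv_of_mul_eq_one_left h
  have hsub : ∀ z : En n, ‖z‖ < 1/2 → Metric.closedBall x ‖z‖ ⊆ flatBall n 1 := by
    intro z hz w hw
    rw [mem_closedBall_iff_norm] at hw
    have := norm_add_le (w - x) x
    rw [sub_add_cancel] at this
    show ‖w‖ < 1
    linarith
  have hlip : ∀ z : En n, ‖z‖ < 1/2 → |f (x+z) - f x| ≤ M1 * ‖z‖ := by
    intro z hz
    have h := (convex_closedBall x ‖z‖).norm_image_sub_le_of_norm_hasFDerivWithin_le
      (fun w hw => (hfd w (hsub z hz hw)).hasFDerivWithinAt) (fun w hw => hf1 w (hsub z hz hw))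
      (Metric.mem_closedBall_self (norm_nonneg z))
      (show x + z ∈ Metric.closedBall x ‖z‖ by simp [mem_closedBall_iff_norm])
    simpa using h
  have htay : ∀ z : En n, ‖z‖ < 1/2 → |f (x+z) - f x - f' x z| ≤ M2 * ‖z‖^2 := by
    intro z hz
    have h := (convex_closedBall x ‖z‖).norm_image_sub_le_of_norm_hasFDerivWithin_le'
      (φ := f' x) (C := M2 * ‖z‖)
      (fun w hw => (hfd w (hsub z hz hw)).hasFDerivWithinAt)
      (fun w hw => (hf2 w (hsub z hz hw) x hxm).trans
        (mul_le_mul_of_nonneg_left (mem_closedBall_iff_norm.1 hw) hM2))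
      (Metric.mem_closedBall_self (norm_nonneg z))
      (show x + z ∈ Metric.closedBall x ‖z‖ by simp [mem_closedBall_iff_norm])
    rw [add_sub_cancel_left, Real.norm_eq_abs] at h
    linarith
  have hbd : ∀ z : En n, |f (x+z) - f x| ≤ 2 * M0 := by
    intro z
    have h1 := abs_le.1 (hf0 (x+z))
    have h2 := abs_le.1 (hf0 x)
    rw [abs_le]
    constructor <;> linarith [h1.1, h1.2, h2.1, h2.2]
  have hfm' : Measurable fun z : En n => f (x + z) := hfm.comp (measurable_const_add x)
  have hInt : Integrable (fun z : En n => (f (x + z) - f x) * ‖z‖ ^ (-p)) := by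
    refine (hhint.const_mul (M1 + 4 * M0)).mono'
      (((hfm'.sub_const _).mul (by fun_prop)).aestronglyMeasurable) (ae_of_all _ fun z => ?_)
    have hr : 0 ≤ ‖z‖ ^ (-p) := Real.rpow_nonneg (norm_nonneg _) _
    rw [norm_mul, Real.norm_of_nonneg hr, Real.norm_eq_abs, ← mul_assoc]
    refine mul_le_mul_of_nonneg_right ?_ hr
    rcases lt_or_ge ‖z‖ (1/2) with hz | hz
    · rw [min_eq_left (by linarith)]
      have := hlip z hz
      nlinarith [norm_nonneg z]
    · have := hbd z
      have h2 : 1/2 ≤ min ‖z‖ 1 := le_min hz (by norm_num)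
      nlinarith
  refine ⟨hInt, fun y hy => ?_⟩
  have hys : 0 < y ^ (2*s) := Real.rpow_pos_of_pos hy _
  have hPint : Integrable (fun z : En n => Cna * y ^ (2*s) * (‖z‖^2 + y^2) ^ (-(p/2))) :=
    Integrable.of_integral_ne_zero (by rw [hnorm y hy]; norm_num)
  have hQint : Integrable (fun z : En n => (‖z‖^2 + y^2) ^ (-(p/2))) := by
    refine (integrable_const_mul_iff ?_ _).1 hPint
    exact (mul_pos hCna hys).ne'.isUnit
  have hfQ : Integrable (fun z : En n => (f (x+z) - f x) * (‖z‖^2 + y^2) ^ (-(p/2))) :=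
    hQint.bdd_mul (c := 2*M0) (hfm'.sub_const _).aestronglyMeasurable (ae_of_all _ hbd)
  have hfP : Integrable (fun z : En n => f (x+z) * (Cna * y ^ (2*s) * (‖z‖^2 + y^2) ^ (-(p/2)))) :=
    hPint.bdd_mul (c := M0) hfm'.aestronglyMeasurable (ae_of_all _ fun z => hf0 _)
  set κ : En n → ℝ := fun z => (‖z‖^2 + y^2) ^ (-(p/2)) - ‖z‖ ^ (-p) with hκ
  have hκm : Measurable κ := by rw [hκ]; fun_prop
  have hfκ : Integrable (fun z : En n => (f (x+z) - f x) * κ z) := by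
    refine (hfQ.sub hInt).congr (ae_of_all _ fun z => ?_)
    simp only [hκ, Pi.sub_apply]; ring
  have hmain : (∫ z : En n, f (x + z) * (Cna * y ^ (2*s) * (‖z‖^2 + y^2) ^ (-(p/2)))) - f x
      - y ^ (2*s) * (Cna * ∫ z : En n, (f (x + z) - f x) * ‖z‖ ^ (-p))
      = Cna * (y ^ (2*s) * ∫ z : En n, (f (x+z) - f x) * κ z) := by
    have e1 : f x = ∫ z : En n, f x * (Cna * y ^ (2*s) * (‖z‖^2 + y^2) ^ (-(p/2))) := by
      rw [integral_const_mul, hnorm y hy, mul_one]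
    have e2 : (∫ z : En n, f (x + z) * (Cna * y ^ (2*s) * (‖z‖^2 + y^2) ^ (-(p/2)))) - f x
        = Cna * y ^ (2*s) * ∫ z : En n, (f (x+z) - f x) * (‖z‖^2 + y^2) ^ (-(p/2)) := by
      conv_lhs => rw [e1]
      rw [← integral_sub hfP (hPint.const_mul _), ← integral_const_mul]
      congr 1
      ext z
      ring
    have e3 : ∫ z : En n, (f (x+z) - f x) * κ z =
        (∫ z : En n, (f (x+z) - f x) * (‖z‖^2 + y^2) ^ (-(p/2))) -
        ∫ z : En n, (f (x + z) - f x) * ‖z‖ ^ (-p) := by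
      rw [← integral_sub hfQ hInt]
      congr 1
      ext z
      simp only [hκ]
      ring
    rw [e2, e3]
    ring
  set L : En n → ℝ := fun z => (Metric.ball (0 : En n) (1/2)).indicator (fun z => f' x z) z with hL
  have hLm : Measurable L :=
    ((f' x).continuous.measurable).indicator Metric.isOpen_ball.measurableSet
  have hLin : ∀ z, ‖z‖ < 1/2 → L z = f' x z := fun z hz =>
    indicator_of_mem (by simpa using hz) _
  have hLout : ∀ z, 1/2 ≤ ‖z‖ → L z = 0 := fun z hz =>
    indicator_of_notMem (by simpa using hz) _
  have hLκ : Integrable (fun z => L z * κ z) := by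
    refine (hhint.const_mul M1).mono' (hLm.mul hκm).aestronglyMeasurable (ae_of_all _ fun z => ?_)
    have hr : 0 ≤ ‖z‖ ^ (-p) := Real.rpow_nonneg (norm_nonneg _) _
    have hr' : 0 ≤ min ‖z‖ 1 := le_min (norm_nonneg _) (by norm_num)
    rcases lt_or_ge ‖z‖ (1/2) with hz | hz
    · rcases eq_or_ne z 0 with rfl | hz0
      · rw [hLin _ hz]; simp
      rw [hLin z hz, min_eq_left (by linarith), norm_mul, ← mul_assoc]
      have k := aux_kernel_le (p/2) ‖z‖ y (by positivity) (norm_pos_iff.2 hz0) hy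
      rw [show 2 * (p/2) = p by ring] at k
      refine mul_le_mul ?_ ?_ (norm_nonneg _) (by positivity)
      · exact ((f' x).le_opNorm z).trans
          (mul_le_mul_of_nonneg_right (hf1 x hxm) (norm_nonneg _))
      · rw [Real.norm_eq_abs, abs_sub_comm, abs_of_nonneg k.1]
        exact k.2.1
    · rw [hLout z hz]
      simp only [zero_mul, norm_zero]
      positivity
  have hLzero : ∫ z, L z * κ z = 0 := by
    have h := integral_neg_eq_self (fun z => L z * κ z) (volume : Measure (En n))
    have h2 : ∀ z, L (-z) * κ (-z) = -(L z * κ z) := by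
      intro z
      have : κ (-z) = κ z := by simp only [hκ, norm_neg]
      rw [this]
      rcases lt_or_ge ‖z‖ (1/2) with hz | hz
      · rw [hLin z hz, hLin (-z) (by rwa [norm_neg]), map_neg]; ring
      · rw [hLout z hz, hLout (-z) (by rwa [norm_neg])]; ring
    simp only [h2, integral_neg] at h
    linarith
  have hF : ∀ z, |f (x+z) - f x - L z| ≤ (M2 + 8*M0) * ‖z‖^2 := by
    intro z
    rcases lt_or_ge ‖z‖ (1/2) with hz | hz
    · rw [hLin z hz]
      have := htay z hz
      nlinarith [mul_nonneg hM0 (sq_nonneg ‖z‖)]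
    · rw [hLout z hz, sub_zero]
      have := hbd z
      have h4 : 1/4 ≤ ‖z‖^2 := by nlinarith
      nlinarith [mul_nonneg hM2 (sq_nonneg ‖z‖)]
  have hsplit : ∫ z : En n, (f (x+z) - f x) * κ z = ∫ z : En n, (f (x+z) - f x - L z) * κ z := by
    rw [← sub_zero (∫ z : En n, (f (x+z) - f x) * κ z), ← hLzero, ← integral_sub hfκ hLκ]
    congr 1
    ext z
    ring
  have hbnd : |∫ z : En n, (f (x+z) - f x - L z) * κ z| ≤
      ∫ z : En n, (M2 + 8*M0) * ((1 + p/2) * (y ^ (2 - p) * H (y⁻¹ • z))) := by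
    rw [← Real.norm_eq_abs]
    refine norm_integral_le_of_norm_le ?_ (ae_of_all _ fun z => ?_)
    · exact ((((hHint.comp_smul (inv_ne_zero hy.ne')).const_mul _).const_mul _).const_mul _)
    · rw [norm_mul, Real.norm_eq_abs, Real.norm_eq_abs]
      have h1 := aux_weighted n s hs.1 y hy z
      calc _ ≤ (M2 + 8*M0) * ‖z‖^2 * |κ z| := mul_le_mul_of_nonneg_right (hF z) (abs_nonneg _)
        _ = (M2 + 8*M0) * (‖z‖^2 * |κ z|) := by ring
        _ ≤ _ := mul_le_mul_of_nonneg_left h1 (by positivity)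
  rw [hmain, hsplit, abs_mul, abs_mul, abs_of_pos hys, hCI]
  have hsc := aux_scale n s y hy H
  rw [← hpdef, ← hA] at hsc
  rw [integral_const_mul, integral_const_mul] at hbnd
  calc |I⁻¹| * (y ^ (2*s) * |∫ z : En n, (f (x+z) - f x - L z) * κ z|)
      ≤ |I⁻¹| * (y ^ (2*s) * ((M2 + 8*M0) * ((1 + p/2) *
          ∫ z : En n, y ^ (2 - p) * H (y⁻¹ • z)))) := by gcongr
    _ = |I⁻¹| * ((M2 + 8*M0) * (1 + p/2) *
          (y ^ (2*s) * ∫ z : En n, y ^ (2 - p) * H (y⁻¹ • z))) := by ring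
    _ = |I⁻¹| * ((1 + p/2) * A) * y^2 * (M2 + 8*M0) := by rw [hsc]; ring
    _ ≤ |I⁻¹| * ((1 + p/2) * A) * y^2 * (8 * (M0 + M1 + M2)) :=
        mul_le_mul_of_nonneg_left (by linarith) (by positivity)
    _ ≤ |I⁻¹| * ((1 + p/2) * A) * y^2 * (8 * (M0 + M1 + M2)) + y^2 * (M0 + M1 + M2) := by
        have : 0 ≤ y^2 * (M0 + M1 + M2) := by positivity
        linarith
    _ = _ := by ring

end
end
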